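/- Let Q ∈ H^{1/2}(ℝ^3) be a nonzero radial solution of √(−Δ) Q + Q − (|x|^{-1} ∗ |Q|^2) Q = 0. For μ > 0 set Q_μ(x) = μ^{3/2} Q(μx) and u_μ(t,x) = e^{itμ} Q_μ(x). Then: (i) ‖Q_μ‖_{L^2(ℝ^3)} = ‖Q‖_{L^2(ℝ^3)} for all μ > 0; (ii) for any fixed t > 0, setting μ_1(n) = (π/(2t))(n+1)^2 and μ_2(n) = (π/(2t)) n^2 for n ∈ ℕ, one has ‖u_{μ_1(n)}(t) − u_{μ_2(n)}(t)‖_{L^2(ℝ^3)}^2 = 2‖Q‖_{L^2(ℝ^3)}^2 for all n, while ‖u_{μ_1(n)}(0) − u_{μ_2(n)}(0)‖_{L^2(ℝ^3)} → 0 as n → ∞. Consequently, for the massless (m = 0) boson star equation i∂_t u = √(−Δ)u − (|x|^{-1} ∗ |u|^2)u and any t > 0, the map φ ↦ u(t) fails to be uniformly continuous with respect to the L^2-norm on the set {φ ∈ L^2(ℝ^3) : φ radial, ‖φ‖_{L^2}^2 ≥ ‖Q‖_{L^2}^2}. -/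

import Mathlib

open MeasureTheory Real Complex Filter
open scoped FourierTransform ENNReal Topology

noncomputable section

abbrev Rd : Type := EuclideanSpace ℝ (Fin 3)

/-- Sobolev `H^s` norm (as an extended real), defined on the Fourier side. -/
def HsNorm (s : ℝ) (f : Rd → ℂ) : ℝ≥0∞ :=
  (∫⁻ ξ : Rd, ENNReal.ofReal ((1 + ‖ξ‖ ^ 2) ^ s * ‖𝓕 f ξ‖ ^ 2)) ^ (1 / 2 : ℝ)

/-- Convolution with the Newtonian potential `|x|⁻¹`. -/
def newton (f : Rd → ℂ) (x : Rd) : ℂ := ∫ y : Rd, f y / (‖x - y‖ : ℂ)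

/-- The Fourier multiplier `√(-Δ + a)` with symbol `√(|ξ|² + a)`. -/
def sqrtOp (a : ℝ) (f : Rd → ℂ) : Rd → ℂ :=
  𝓕⁻ fun ξ => ((Real.sqrt (‖ξ‖ ^ 2 + a) : ℝ) : ℂ) * 𝓕 f ξ

/-- Radiality of a function on `ℝ³`. -/
def IsRadial (f : Rd → ℂ) : Prop := ∀ x y : Rd, ‖x‖ = ‖y‖ → f x = f y

/-- `L²`-critical rescaling `Q_μ(x) = μ^{3/2} Q(μx)`. -/
def qScale (Q : Rd → ℂ) (μ : ℝ) : Rd → ℂ := fun x => ((μ ^ (3 / 2 : ℝ) : ℝ) : ℂ) * Q (μ • x)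

/-- The solitary wave `u_μ(t,x) = e^{itμ} Q_μ(x)`. -/
def solWave (Q : Rd → ℂ) (μ t : ℝ) : Rd → ℂ := fun x =>
  Complex.exp (Complex.I * (t * μ : ℝ)) * qScale Q μ x

/-- radial part of the spherical measure -/
def radMeas : Measure ℝ :=
  (volume.restrict (Set.Ioi (0:ℝ))).withDensity (fun s => ENNReal.ofReal (s ^ 2))

/-- polar angle part of the spherical measure -/
def thetaMeas : Measure ℝ :=
  (volume.restrict (Set.Ioo (0:ℝ) Real.pi)).withDensity (fun s => ENNReal.ofReal (Real.sin s))

/-- azimuth part -/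
def phiMeas : Measure ℝ := volume.restrict (Set.Ioo (-Real.pi) Real.pi)

instance : SFinite radMeas := by unfold radMeas; infer_instance
instance : SFinite thetaMeas := by unfold thetaMeas; infer_instance
instance : SFinite phiMeas := by unfold phiMeas; infer_instance

/-- cartesian to euclidean -/
def cart (p : ℝ × ℝ × ℝ) : Rd := !₂[p.1, p.2.1, p.2.2]

/-- spherical coordinates -/
def sphMap (p : ℝ × ℝ × ℝ) : Rd :=
  cart (p.1 * Real.cos p.2.1, p.1 * Real.sin p.2.1 * Real.cos p.2.2,
    p.1 * Real.sin p.2.1 * Real.sin p.2.2)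

lemma cart_mp : MeasurePreserving cart volume volume := by
  have h1 := (PiLp.volume_preserving_toLp (Fin 3))
  have h2 := (volume_preserving_piFinSuccAbove (fun _ : Fin 3 => ℝ) 0).symm
  have h3 := (volume_preserving_finTwoArrow ℝ).symm
  have h4 := (MeasurePreserving.id (volume : Measure ℝ)).prod h3
  have := h1.comp (h2.comp h4)
  convert! this using 1
  ext p i
  fin_cases i <;> simp [cart, MeasurableEquiv.piFinSuccAbove, MeasurableEquiv.finTwoArrow]

lemma continuous_cart : Continuous cart := by
  unfold cart
  refine (PiLp.continuous_toLp 2 _).comp (continuous_pi fun i => ?_)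
  fin_cases i <;> simp <;> fun_prop

lemma continuous_sphMap : Continuous sphMap := by
  unfold sphMap
  exact continuous_cart.comp (by fun_prop)

lemma lintegral_sph (F : Rd → ℝ≥0∞) (hF : Measurable F) :
    ∫⁻ y, F y = ∫⁻ s, ∫⁻ θ, ∫⁻ φ, F (sphMap (s, θ, φ)) ∂phiMeas ∂thetaMeas ∂radMeas := by
  have hc : Measurable cart := continuous_cart.measurable
  rw [← cart_mp.lintegral_comp hF]
  have e1 : ∫⁻ p, F (cart p) = ∫⁻ a, ∫⁻ q : ℝ × ℝ, F (cart (a, q)) := by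
    rw [Measure.volume_eq_prod, lintegral_prod _ (by fun_prop)]
  rw [e1]
  set G : ℝ × ℝ → ℝ≥0∞ := fun p => (Set.Ioi (0:ℝ)).indicator (fun _ => 1) p.2 *
    (ENNReal.ofReal p.2 * ∫⁻ φ, F (cart (p.1, p.2 * Real.cos φ, p.2 * Real.sin φ)) ∂phiMeas) with hG
  have hGm : Measurable G := by
    refine Measurable.mul ((measurable_const.indicator measurableSet_Ioi).comp measurable_snd) ?_
    refine Measurable.mul (by fun_prop) ?_
    refine Measurable.lintegral_prod_right' (f := fun x : (ℝ × ℝ) × ℝ => F (cart (x.1.1, x.1.2 * Real.cos x.2, x.1.2 * Real.sin x.2))) ?_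
    fun_prop
  have e2 : ∀ a : ℝ, ∫⁻ q : ℝ × ℝ, F (cart (a, q)) = ∫⁻ q, G (a, q) := by
    intro a
    rw [← lintegral_comp_polarCoord_symm]
    have : polarCoord.target = Set.Ioi (0:ℝ) ×ˢ Set.Ioo (-Real.pi) Real.pi := rfl
    rw [this, Measure.volume_eq_prod, ← Measure.prod_restrict]
    simp only [polarCoord_symm_apply, smul_eq_mul]
    rw [lintegral_prod _ (by fun_prop), ← lintegral_indicator measurableSet_Ioi]
    refine lintegral_congr fun q => ?_
    by_cases hq : 0 < q
    · have : q ∈ Set.Ioi (0:ℝ) := hq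
      simp only [this, Set.indicator_of_mem, hG, one_mul]
      rw [lintegral_const_mul]; rfl
      fun_prop
    · have : q ∉ Set.Ioi (0:ℝ) := hq
      simp only [this, not_false_eq_true, Set.indicator_of_notMem, hG, zero_mul]
  simp_rw [e2]
  rw [← lintegral_prod (μ := volume) (ν := volume) G hGm.aemeasurable, ← Measure.volume_eq_prod,
    ← lintegral_comp_polarCoord_symm]
  have : polarCoord.target = Set.Ioi (0:ℝ) ×ˢ Set.Ioo (-Real.pi) Real.pi := rfl
  rw [this, Measure.volume_eq_prod, ← Measure.prod_restrict]
  simp only [polarCoord_symm_apply, smul_eq_mul]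
  rw [lintegral_prod _ (by fun_prop)]
  have hm : Measurable fun x : (ℝ × ℝ) × ℝ => F (sphMap (x.1.1, x.1.2, x.2)) :=
    hF.comp (continuous_sphMap.measurable.comp (by fun_prop))
  have hm1 : Measurable fun x : (ℝ × ℝ) => ∫⁻ φ, F (sphMap (x.1, x.2, φ)) ∂phiMeas :=
    Measurable.lintegral_prod_right' hm
  have hm2 : Measurable fun s : ℝ => ∫⁻ θ, ∫⁻ φ, F (sphMap (s, θ, φ)) ∂phiMeas ∂thetaMeas :=
    Measurable.lintegral_prod_right' hm1
  rw [radMeas, lintegral_withDensity_eq_lintegral_mul _ (by fun_prop) hm2]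
  refine setLIntegral_congr_fun measurableSet_Ioi fun s hs => ?_
  simp only [Pi.mul_apply]
  have hs : 0 < s := hs
  have hm3 : Measurable fun θ : ℝ => ∫⁻ φ, F (sphMap (s, θ, φ)) ∂phiMeas :=
    hm1.comp (by fun_prop : Measurable fun θ : ℝ => (s, θ))
  rw [thetaMeas, lintegral_withDensity_eq_lintegral_mul _ (by fun_prop) hm3]
  rw [← lintegral_const_mul]
  rotate_left
  · exact Measurable.mul (by fun_prop) hm3
  rw [← lintegral_indicator measurableSet_Ioo, ← lintegral_indicator measurableSet_Ioo]
  refine lintegral_congr fun θ => ?_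
  have hsin : 0 < s * Real.sin θ ↔ 0 < Real.sin θ := by
    constructor
    · intro h; exact pos_of_mul_pos_right h hs.le
    · intro h; positivity
  by_cases h1 : θ ∈ Set.Ioo 0 Real.pi
  · have h2 : θ ∈ Set.Ioo (-Real.pi) Real.pi := ⟨by linarith [h1.1, Real.pi_pos], h1.2⟩
    have h3 : s * Real.sin θ ∈ Set.Ioi (0:ℝ) := hsin.2 (Real.sin_pos_of_mem_Ioo h1)
    simp only [h1, h2, Set.indicator_of_mem, hG, h3, one_mul, Pi.mul_apply]
    rw [← mul_assoc, ← mul_assoc, ← ENNReal.ofReal_mul hs.le, ← ENNReal.ofReal_mul (by positivity)]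
    congr 2
    ring
  · simp only [h1, not_false_eq_true, Set.indicator_of_notMem]
    by_cases h2 : θ ∈ Set.Ioo (-Real.pi) Real.pi
    · have h3 : s * Real.sin θ ∉ Set.Ioi (0:ℝ) := by
        intro h
        have h := hsin.1 h
        have : θ ≤ 0 := by by_contra h'; exact h1 ⟨by linarith, h2.2⟩
        linarith [Real.sin_nonpos_of_nonpos_of_neg_pi_le this h2.1.le]
      simp only [h2, Set.indicator_of_mem, hG, h3, not_false_eq_true, Set.indicator_of_notMem, zero_mul, mul_zero]
    · simp only [h2, not_false_eq_true, Set.indicator_of_notMem]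

lemma sphMap_mp : MeasurePreserving sphMap (radMeas.prod (thetaMeas.prod phiMeas)) volume := by
  refine ⟨continuous_sphMap.measurable, ?_⟩
  ext A hA
  rw [Measure.map_apply continuous_sphMap.measurable hA, ← lintegral_indicator_one (continuous_sphMap.measurable hA),
    ← lintegral_indicator_one hA, lintegral_sph _ (measurable_one.indicator hA)]
  have hm : Measurable fun x : ℝ × ℝ × ℝ => A.indicator (1 : Rd → ℝ≥0∞) (sphMap x) :=
    (measurable_one.indicator hA).comp continuous_sphMap.measurable
  have : ((sphMap ⁻¹' A).indicator (1 : ℝ × ℝ × ℝ → ℝ≥0∞)) = fun x => A.indicator (1 : Rd → ℝ≥0∞) (sphMap x) := rfl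
  rw [this, lintegral_prod _ hm.aemeasurable]
  refine lintegral_congr fun s => ?_
  rw [lintegral_prod]
  exact (hm.comp (by fun_prop : Measurable fun q : ℝ × ℝ => (s, q))).aemeasurable

lemma norm_sphMap {s : ℝ} (hs : 0 ≤ s) (q : ℝ × ℝ) : ‖sphMap (s, q)‖ = s := by
  have : ‖sphMap (s, q)‖ ^ 2 = s ^ 2 := by
    rw [EuclideanSpace.norm_sq_eq, Fin.sum_univ_three]
    simp only [sphMap, cart, Real.norm_eq_abs, sq_abs]
    simp
    linear_combination s ^ 2 * Real.sin_sq_add_cos_sq q.1 + s ^ 2 * Real.sin q.1 ^ 2 * Real.sin_sq_add_cos_sq q.2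
  exact (sq_eq_sq₀ (norm_nonneg _) hs).1 this

/-- the unit vector along the polar axis, scaled -/
def axis (r : ℝ) : Rd := cart (r, 0, 0)

lemma norm_axis (r : ℝ) : ‖axis r‖ = |r| := by
  rw [EuclideanSpace.norm_eq, Fin.sum_univ_three]
  simp [axis, cart, Real.sqrt_sq_eq_abs]

lemma norm_axis_sub_sphMap (r s : ℝ) (q : ℝ × ℝ) :
    ‖axis r - sphMap (s, q)‖ = √(r ^ 2 + s ^ 2 - 2 * r * s * Real.cos q.1) := by
  rw [EuclideanSpace.norm_eq, Fin.sum_univ_three]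
  congr 1
  simp only [axis, sphMap, cart, Real.norm_eq_abs, sq_abs]
  simp
  linear_combination s ^ 2 * Real.sin_sq_add_cos_sq q.1 + s ^ 2 * Real.sin q.1 ^ 2 * Real.sin_sq_add_cos_sq q.2

lemma inner_axis_sphMap (r s : ℝ) (q : ℝ × ℝ) :
    inner ℝ (sphMap (s, q)) (axis r) = r * s * Real.cos q.1 := by
  simp [axis, sphMap, cart, PiLp.inner_apply, Fin.sum_univ_three]
  ring

lemma thetaMeas_univ : thetaMeas Set.univ = 2 := by
  rw [thetaMeas, withDensity_apply _ MeasurableSet.univ, Measure.restrict_univ,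
    ← ofReal_integral_eq_lintegral_ofReal]
  · rw [← integral_Ioc_eq_integral_Ioo, ← intervalIntegral.integral_of_le Real.pi_pos.le, integral_sin]
    norm_num
  · exact (Real.continuous_sin.integrableOn_Icc).mono_set Set.Ioo_subset_Icc_self
  · filter_upwards [ae_restrict_mem measurableSet_Ioo] with θ hθ using (Real.sin_pos_of_mem_Ioo hθ).le

instance : IsFiniteMeasure thetaMeas := ⟨by rw [thetaMeas_univ]; norm_num⟩
instance : IsFiniteMeasure phiMeas := by unfold phiMeas; infer_instance

lemma theta_lint {r s : ℝ} (hr : 0 < r) (hs : 0 < s) (hrs : r ≠ s) :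
    ∫⁻ θ, ENNReal.ofReal (1 / √(r ^ 2 + s ^ 2 - 2 * r * s * Real.cos θ)) ∂thetaMeas
      = ENNReal.ofReal (2 / max r s) := by
  have hpos : ∀ θ : ℝ, 0 < r ^ 2 + s ^ 2 - 2 * r * s * Real.cos θ := by
    intro θ
    have : 0 < (r - s) ^ 2 := by have := sub_ne_zero.2 hrs; positivity
    nlinarith [Real.cos_le_one θ, mul_pos hr hs]
  have hcont : Continuous fun θ => Real.sin θ * (1 / √(r ^ 2 + s ^ 2 - 2 * r * s * Real.cos θ)) := by
    refine Real.continuous_sin.mul (continuous_const.div (by fun_prop) fun θ => (Real.sqrt_pos.2 (hpos θ)).ne')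
  rw [thetaMeas, lintegral_withDensity_eq_lintegral_mul _ (by fun_prop) (by fun_prop)]
  have e : ∀ θ ∈ Set.Ioo 0 Real.pi, ((fun s => ENNReal.ofReal (Real.sin s)) * fun θ => ENNReal.ofReal (1 / √(r ^ 2 + s ^ 2 - 2 * r * s * Real.cos θ))) θ
      = ENNReal.ofReal (Real.sin θ * (1 / √(r ^ 2 + s ^ 2 - 2 * r * s * Real.cos θ))) := by
    intro θ hθ
    rw [ENNReal.ofReal_mul (Real.sin_pos_of_mem_Ioo hθ).le]; rfl
  rw [setLIntegral_congr_fun measurableSet_Ioo e, ← ofReal_integral_eq_lintegral_ofReal]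
  rotate_left
  · exact (hcont.integrableOn_Icc).mono_set Set.Ioo_subset_Icc_self
  · filter_upwards [ae_restrict_mem measurableSet_Ioo] with θ hθ
    have := (Real.sin_pos_of_mem_Ioo hθ).le
    positivity
  congr 1
  rw [← integral_Ioc_eq_integral_Ioo, ← intervalIntegral.integral_of_le Real.pi_pos.le]
  have hd : ∀ θ ∈ Set.uIcc 0 Real.pi, HasDerivAt (fun θ => √(r ^ 2 + s ^ 2 - 2 * r * s * Real.cos θ) / (r * s))
      (Real.sin θ * (1 / √(r ^ 2 + s ^ 2 - 2 * r * s * Real.cos θ))) θ := by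
    intro θ _
    have h1 : HasDerivAt (fun θ => r ^ 2 + s ^ 2 - 2 * r * s * Real.cos θ) (2 * r * s * Real.sin θ) θ := by
      have := ((Real.hasDerivAt_cos θ).const_mul (2 * r * s)).const_sub (r ^ 2 + s ^ 2)
      convert! this using 1; ring
    convert! (h1.sqrt (hpos θ).ne').div_const (r * s) using 1
    have := (Real.sqrt_pos.2 (hpos θ)).ne'
    field_simp
  rw [intervalIntegral.integral_eq_sub_of_hasDerivAt hd (hcont.intervalIntegrable _ _)]
  have h1 : √(r ^ 2 + s ^ 2 - 2 * r * s * Real.cos Real.pi) = r + s := by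
    rw [Real.cos_pi, ← Real.sqrt_sq (by positivity : 0 ≤ r + s)]; congr 1; ring
  have h2 : √(r ^ 2 + s ^ 2 - 2 * r * s * Real.cos 0) = |r - s| := by
    rw [Real.cos_zero, ← Real.sqrt_sq_eq_abs]; congr 1; ring
  rw [h1, h2]
  rcases le_total r s with h | h
  · rw [max_eq_right h, abs_of_nonpos (by linarith)]; field_simp; ring
  · rw [max_eq_left h, abs_of_nonneg (by linarith)]; field_simp; ring

/-- an isometry sending `x` to `y` -/
lemma exists_isometry {x y : Rd} (h : ‖x‖ = ‖y‖) : ∃ A : Rd ≃ₗᵢ[ℝ] Rd, A x = y :=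
  ⟨_, Submodule.reflection_sub h⟩

lemma newton_lint (ρ : Rd → ℝ≥0∞) (hrad : ∀ x y, ‖x‖ = ‖y‖ → ρ x = ρ y) (hm : AEMeasurable ρ) (x : Rd) :
    ∫⁻ y, ρ y * ENNReal.ofReal (1 / ‖x - y‖) = ∫⁻ y, ρ y * ENNReal.ofReal (1 / max ‖x‖ ‖y‖) := by
  rcases eq_or_ne x 0 with rfl | hx
  · simp
  set r := ‖x‖ with hr
  have hr0 : 0 < r := norm_pos_iff.2 hx
  obtain ⟨A, hA⟩ := exists_isometry (x := axis r) (y := x) (by rw [norm_axis, abs_of_pos hr0])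
  rw [← (A.measurePreserving).lintegral_comp_emb A.toHomeomorph.measurableEmbedding]
  have e0 : ∀ y, ρ (A y) * ENNReal.ofReal (1 / ‖x - A y‖) = ρ y * ENNReal.ofReal (1 / ‖axis r - y‖) := by
    intro y
    rw [hrad (A y) y (A.norm_map y), ← hA, ← map_sub, A.norm_map]
  simp_rw [e0]
  set ρ' := hm.mk ρ with hρ'
  have hmk := hm.ae_eq_mk
  have hm' : Measurable ρ' := hm.measurable_mk
  have e1 : ∫⁻ y, ρ y * ENNReal.ofReal (1 / ‖axis r - y‖) = ∫⁻ y, ρ' y * ENNReal.ofReal (1 / ‖axis r - y‖) :=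
    lintegral_congr_ae (by filter_upwards [hmk] with y hy; rw [hy])
  have e2 : ∫⁻ y, ρ y * ENNReal.ofReal (1 / max r ‖y‖) = ∫⁻ y, ρ' y * ENNReal.ofReal (1 / max r ‖y‖) :=
    lintegral_congr_ae (by filter_upwards [hmk] with y hy; rw [hy])
  rw [e1, e2]
  have m1 : Measurable fun y : Rd => ρ' y * ENNReal.ofReal (1 / ‖axis r - y‖) := by fun_prop
  have m2 : Measurable fun y : Rd => ρ' y * ENNReal.ofReal (1 / max r ‖y‖) := by fun_prop
  have m1' : Measurable fun y : ℝ × ℝ × ℝ => ρ' (sphMap y) * ENNReal.ofReal (1 / ‖axis r - sphMap y‖) :=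
    m1.comp continuous_sphMap.measurable
  have m2' : Measurable fun y : ℝ × ℝ × ℝ => ρ' (sphMap y) * ENNReal.ofReal (1 / max r ‖sphMap y‖) :=
    m2.comp continuous_sphMap.measurable
  rw [← sphMap_mp.lintegral_comp m1, ← sphMap_mp.lintegral_comp m2,
    lintegral_prod _ m1'.aemeasurable, lintegral_prod _ m2'.aemeasurable]
  have hae := Measure.ae_ae_of_ae_prod (sphMap_mp.quasiMeasurePreserving.ae hmk)
  have hpos : ∀ᵐ s ∂radMeas, 0 < s ∧ s ≠ r := by
    refine (withDensity_absolutelyContinuous _ _).ae_le ?_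
    filter_upwards [ae_restrict_mem measurableSet_Ioi, (ae_restrict_of_ae (Measure.ae_ne volume r))] with s h1 h2
    exact ⟨h1, h2⟩
  refine lintegral_congr_ae ?_
  filter_upwards [hae, hpos] with s hs hs'
  have key : ∀ᵐ q ∂(thetaMeas.prod phiMeas), ρ' (sphMap (s, q)) = ρ (axis s) := by
    filter_upwards [hs] with q hq
    refine hq.symm.trans ?_
    exact hrad _ _ (by rw [norm_sphMap hs'.1.le, norm_axis, abs_of_pos hs'.1])
  have k1 : ∫⁻ q, ρ' (sphMap (s, q)) * ENNReal.ofReal (1 / ‖axis r - sphMap (s, q)‖) ∂(thetaMeas.prod phiMeas)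
      = ∫⁻ q : ℝ × ℝ, ρ (axis s) * ENNReal.ofReal (1 / √(r ^ 2 + s ^ 2 - 2 * r * s * Real.cos q.1)) ∂(thetaMeas.prod phiMeas) := by
    refine lintegral_congr_ae ?_
    filter_upwards [key] with q hq
    rw [hq, norm_axis_sub_sphMap]
  have k2 : ∫⁻ q, ρ' (sphMap (s, q)) * ENNReal.ofReal (1 / max r ‖sphMap (s, q)‖) ∂(thetaMeas.prod phiMeas)
      = ∫⁻ q : ℝ × ℝ, ρ (axis s) * ENNReal.ofReal (1 / max r s) ∂(thetaMeas.prod phiMeas) := by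
    refine lintegral_congr_ae ?_
    filter_upwards [key] with q hq
    rw [hq, norm_sphMap hs'.1.le]
  rw [k1, k2, lintegral_const_mul _ (by fun_prop), lintegral_const_mul _ (by fun_prop),
    lintegral_prod _ (by fun_prop), lintegral_prod _ (by fun_prop)]
  simp only [lintegral_const]
  rw [lintegral_mul_const _ (by fun_prop), theta_lint hr0 hs'.1 hs'.2.symm, thetaMeas_univ]
  have : ENNReal.ofReal (2 / max r s) = ENNReal.ofReal (1 / max r s) * 2 := by
    rw [show (2 : ℝ≥0∞) = ENNReal.ofReal 2 by simp, ← ENNReal.ofReal_mul (by positivity)]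
    congr 1; ring
  rw [this]; ring

lemma newton_real (ρ : Rd → ℝ) (h0 : ∀ x, 0 ≤ ρ x) (hrad : ∀ x y, ‖x‖ = ‖y‖ → ρ x = ρ y)
    (hm : AEMeasurable ρ) (x : Rd) :
    ∫ y, ρ y / ‖x - y‖ = ∫ y, ρ y / max ‖x‖ ‖y‖ := by
  rw [integral_eq_lintegral_of_nonneg_ae, integral_eq_lintegral_of_nonneg_ae]
  · congr 1
    have := newton_lint (fun y => ENNReal.ofReal (ρ y)) (fun x y h => by simp only [hrad x y h]) hm.ennreal_ofReal x
    convert! this using 3 with y y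
    · rw [← ENNReal.ofReal_mul (h0 _)]; congr 1; ring
    · rw [← ENNReal.ofReal_mul (h0 _)]; congr 1; ring
  · exact Eventually.of_forall fun y => div_nonneg (h0 y) (le_max_of_le_left (norm_nonneg _))
  · exact (hm.div (by fun_prop)).aestronglyMeasurable
  · exact Eventually.of_forall fun y => div_nonneg (h0 y) (norm_nonneg _)
  · exact (hm.div (by fun_prop)).aestronglyMeasurable

lemma newton_eq_ofReal (Q : Rd → ℂ) (x : Rd) :
    newton (fun y => (‖Q y‖ : ℂ) ^ 2) x = ((∫ y, ‖Q y‖ ^ 2 / ‖x - y‖ : ℝ) : ℂ) := by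
  rw [newton, ← integral_complex_ofReal]
  congr 1; ext y; push_cast; rfl

/-- If the kinetic part is trivial, the only radial solution is zero. -/
lemma junk_case (Q : Rd → ℂ) (hQrad : IsRadial Q)
    (hQ : ∀ x, Q x - newton (fun y => (‖Q y‖ : ℂ) ^ 2) x * Q x = 0) : Q = 0 := by
  by_contra hne
  obtain ⟨x0, hx0⟩ : ∃ x, Q x ≠ 0 := by
    by_contra h; push Not at h; exact hne (funext h)
  set ρ : Rd → ℝ := fun y => ‖Q y‖ ^ 2 with hρ
  have hρ0 : ∀ y, 0 ≤ ρ y := fun y => by positivity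
  have hρrad : ∀ x y, ‖x‖ = ‖y‖ → ρ x = ρ y := fun x y h => by simp only [hρ, hQrad x y h]
  have hV : ∀ x, Q x ≠ 0 → ∫ y, ρ y / ‖x - y‖ = 1 := by
    intro x hx
    have h := hQ x
    rw [newton_eq_ofReal] at h
    have h2 : (1 - ((∫ y, ‖Q y‖ ^ 2 / ‖x - y‖ : ℝ) : ℂ)) * Q x = 0 := by rw [← h]; ring
    have h3 := (mul_eq_zero.1 h2).resolve_right hx
    have h4 : (((∫ y, ‖Q y‖ ^ 2 / ‖x - y‖ : ℝ)) : ℂ) = ((1 : ℝ) : ℂ) := by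
      push_cast; linear_combination -h3
    exact_mod_cast h4
  have hintg : ∀ x, Q x ≠ 0 → Integrable (fun y => ρ y / ‖x - y‖) := by
    intro x hx
    by_contra h
    have := hV x hx
    rw [integral_undef h] at this
    norm_num at this
  have hm : AEMeasurable ρ := by
    have h1 : AEMeasurable (fun y => ρ y / ‖x0 - y‖ * ‖x0 - y‖) :=
      (hintg x0 hx0).aestronglyMeasurable.aemeasurable.mul (by fun_prop)
    refine h1.congr ?_
    filter_upwards [Measure.ae_ne volume x0] with y hy
    have : ‖x0 - y‖ ≠ 0 := norm_ne_zero_iff.2 (sub_ne_zero.2 hy.symm)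
    field_simp
  have hW : ∀ x, Q x ≠ 0 → ∫ y, ρ y / max ‖x‖ ‖y‖ = 1 := fun x hx => by
    rw [← newton_real ρ hρ0 hρrad hm, hV x hx]
  have hWint : ∀ x, Q x ≠ 0 → Integrable (fun y => ρ y / max ‖x‖ ‖y‖) := by
    intro x hx
    by_contra h
    have := hW x hx
    rw [integral_undef h] at this
    norm_num at this
  have hnull : ∀ x x', Q x ≠ 0 → Q x' ≠ 0 → ‖x‖ < ‖x'‖ →
      volume ({y | Q y ≠ 0} ∩ Metric.ball 0 ‖x'‖) = 0 := by
    intro x x' hx hx' hlt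
    have hle : (fun y => ρ y / max ‖x'‖ ‖y‖) ≤ᵐ[volume] (fun y => ρ y / max ‖x‖ ‖y‖) := by
      filter_upwards [Measure.ae_ne volume 0] with y hy
      have : 0 < ‖y‖ := norm_pos_iff.2 hy
      refine div_le_div_of_nonneg_left (hρ0 y) (lt_max_of_lt_right this) (max_le_max_right _ hlt.le)
    have := (integral_eq_iff_of_ae_le (hWint x' hx') (hWint x hx) hle).1 (by rw [hW x hx, hW x' hx'])
    have h2 : ∀ᵐ y, ¬ (y ∈ {y | Q y ≠ 0} ∩ Metric.ball 0 ‖x'‖) := by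
      filter_upwards [this, Measure.ae_ne volume 0] with y hy hy0 hmem
      have hyp : 0 < ‖y‖ := norm_pos_iff.2 hy0
      have hρy : ρ y ≠ 0 := by simp only [hρ]; have := hmem.1; simp at this; positivity
      have hlt' : max ‖x‖ ‖y‖ < max ‖x'‖ ‖y‖ := by
        have : ‖y‖ < ‖x'‖ := by simpa using hmem.2
        exact lt_max_of_lt_left (max_lt hlt this)
      have h0 : 0 < max ‖x‖ ‖y‖ := lt_max_of_lt_right hyp
      have : ρ y / max ‖x'‖ ‖y‖ < ρ y / max ‖x‖ ‖y‖ :=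
        div_lt_div_of_pos_left (lt_of_le_of_ne (hρ0 y) hρy.symm) h0 hlt'
      linarith
    rw [ae_iff] at h2
    simp only [not_not] at h2
    exact h2
  have hA : volume {y | Q y ≠ 0} = 0 := by
    set A' := {y | Q y ≠ 0 ∧ ∃ x', Q x' ≠ 0 ∧ ‖y‖ < ‖x'‖} with hA'
    have n1 : volume A' = 0 := by
      refine measure_null_of_locally_null _ ?_
      rintro y ⟨hy, x', hx', hlt⟩
      refine ⟨A' ∩ Metric.ball 0 ‖x'‖, ?_, ?_⟩
      · refine inter_mem self_mem_nhdsWithin (mem_nhdsWithin_of_mem_nhds (Metric.isOpen_ball.mem_nhds ?_))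
        simpa using hlt
      · refine measure_mono_null ?_ (hnull y x' hy hx' hlt)
        exact Set.inter_subset_inter_left _ fun z hz => hz.1
    by_cases hmax : ∃ z, Q z ≠ 0 ∧ ∀ x', Q x' ≠ 0 → ‖x'‖ ≤ ‖z‖
    · obtain ⟨z, hz, hzm⟩ := hmax
      refine measure_mono_null (t := A' ∪ Metric.sphere 0 ‖z‖) ?_ ?_
      · intro y hy
        rcases (hzm y hy).lt_or_eq with h | h
        · exact Or.inl ⟨hy, z, hz, h⟩
        · right; simpa using h
      · rw [measure_union_null_iff]
        exact ⟨n1, Measure.addHaar_sphere _ _ _⟩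
    · push Not at hmax
      refine measure_mono_null ?_ n1
      intro y hy
      obtain ⟨x', h1, h2⟩ := hmax y hy
      exact ⟨hy, x', h1, h2⟩
  have : ∫ y, ρ y / ‖x0 - y‖ = 0 := by
    rw [integral_eq_zero_of_ae]
    have : ∀ᵐ y, ¬ (Q y ≠ 0) := by rw [ae_iff]; simpa using hA
    filter_upwards [this] with y hy
    push Not at hy
    simp [hρ, hy]
  rw [hV x0 hx0] at this
  norm_num at this

/-- Lebesgue measure on the half line -/
def nuP : Measure ℝ := volume.restrict (Set.Ioi (0:ℝ))

instance : SFinite nuP := by unfold nuP; infer_instance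

lemma nuP_pos : ∀ᵐ k ∂nuP, 0 < k := ae_restrict_mem measurableSet_Ioi

/-- `sin (k r) / r` -/
def ph (k r : ℝ) : ℝ := Real.sin (k * r) / r
/-- its `r`-derivative -/
def dph (k r : ℝ) : ℝ := k * Real.cos (k * r) / r - Real.sin (k * r) / r ^ 2

lemma ph_le1 {k r : ℝ} (hk : 0 ≤ k) (hr : 0 < r) : |ph k r| ≤ k := by
  rw [ph, abs_div, abs_of_pos hr, div_le_iff₀ hr]
  have := Real.abs_sin_le_abs (x := k * r)
  rwa [abs_of_nonneg (by positivity : 0 ≤ k * r)] at this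

lemma ph_le2 {k r : ℝ} (hr : 0 < r) : |ph k r| ≤ 1 / r := by
  rw [ph, abs_div, abs_of_pos hr]
  gcongr
  exact Real.abs_sin_le_one _

lemma dph_le1 {k r : ℝ} (hk : 0 ≤ k) (hr : 0 < r) : |dph k r| ≤ 2 * k / r := by
  have h1 : |k * Real.cos (k * r) / r| ≤ k / r := by
    rw [abs_div, abs_of_pos hr, abs_mul, abs_of_nonneg hk]
    gcongr
    exact mul_le_of_le_one_right hk (Real.abs_cos_le_one _)
  have h2 : |Real.sin (k * r) / r ^ 2| ≤ k / r := by
    have := ph_le1 hk hr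
    rw [show Real.sin (k * r) / r ^ 2 = ph k r / r by rw [ph]; field_simp, abs_div, abs_of_pos hr]
    gcongr
  calc |dph k r| ≤ _ := abs_sub _ _
    _ ≤ k / r + k / r := add_le_add h1 h2
    _ = _ := by ring

lemma aux_cube {x : ℝ} (hx : 0 ≤ x) : |x * Real.cos x - Real.sin x| ≤ 2 * x ^ 3 := by
  rcases le_total x 1 with h | h
  · rcases hx.eq_or_lt with rfl | hx'
    · simp
    have h1 := Real.one_sub_sq_div_two_le_cos (x := x)
    have h2 := Real.cos_le_one x
    have h3 := Real.sin_gt_sub_cube hx'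
    have h4 := Real.sin_le hx
    rw [abs_le]
    constructor <;> nlinarith [pow_pos hx' 3]
  · have h1 := Real.abs_cos_le_one x
    have h2 := Real.abs_sin_le_one x
    rw [abs_le] at *
    have : x ≤ x ^ 3 := by nlinarith [mul_nonneg hx (by linarith : 0 ≤ x - 1)]
    constructor <;> nlinarith

lemma dph_le2 {k r : ℝ} (hk : 0 ≤ k) (hr : 0 < r) : |dph k r| ≤ 2 * k ^ 3 * r := by
  have : dph k r = ((k * r) * Real.cos (k * r) - Real.sin (k * r)) / r ^ 2 := by
    rw [dph]; field_simp
  rw [this, abs_div, abs_of_pos (by positivity : 0 < r ^ 2), div_le_iff₀ (by positivity)]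
  refine (aux_cube (by positivity)).trans (le_of_eq ?_)
  ring

lemma dph_le3 {k r : ℝ} (hk : 0 ≤ k) (hr : 0 < r) : |dph k r| ≤ 2 * k ^ 2 := by
  rcases le_total (k * r) 1 with h | h
  · refine (dph_le2 hk hr).trans ?_
    nlinarith [sq_nonneg k]
  · refine (dph_le1 hk hr).trans ?_
    rw [div_le_iff₀ hr]
    nlinarith

lemma decay_bound {X C r : ℝ} (hr : 0 < r) (hC : 0 ≤ C) (h1 : r ≤ 1 → X ≤ C) (h2 : 1 ≤ r → X ≤ C / r ^ 2) :
    X ≤ 2 * C * (1 + r ^ 2)⁻¹ := by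
  rw [← div_eq_mul_inv, le_div_iff₀ (by positivity)]
  rcases le_total r 1 with h | h
  · have := h1 h
    have hr2 : r ^ 2 ≤ 1 := by nlinarith
    by_cases hX : 0 ≤ X
    · nlinarith [mul_le_mul_of_nonneg_left hr2 hX]
    · nlinarith [sq_nonneg r]
  · have := h2 h
    rw [le_div_iff₀ (by positivity)] at this
    have hr2 : 1 ≤ r ^ 2 := by nlinarith
    by_cases hX : 0 ≤ X
    · nlinarith [mul_le_mul_of_nonneg_left hr2 hX]
    · nlinarith [sq_nonneg r]

lemma integrable_decay : Integrable (fun r : ℝ => (1 + r ^ 2)⁻¹) nuP :=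
  integrable_inv_one_add_sq.integrableOn

lemma ph_dph_bound {k l r : ℝ} (hk : 0 ≤ k) (hl : 0 ≤ l) (hr : 0 < r) :
    |ph k r * dph l r| ≤ 4 * (k + 1) * (l ^ 2 + l) * (1 + r ^ 2)⁻¹ := by
  rw [abs_mul]
  refine (decay_bound (C := 2 * (k + 1) * (l ^ 2 + l)) hr (by positivity) ?_ ?_).trans (le_of_eq (by ring))
  · intro _
    refine (mul_le_mul (ph_le1 hk hr) (dph_le3 hl hr) (abs_nonneg _) hk).trans ?_
    nlinarith [mul_nonneg hk hl, mul_nonneg hk (sq_nonneg l), sq_nonneg l]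
  · intro _
    refine (mul_le_mul (ph_le2 hr) (dph_le1 hl hr) (abs_nonneg _) (by positivity)).trans ?_
    rw [show 1 / r * (2 * l / r) = 2 * l / r ^ 2 by field_simp]
    refine div_le_div_of_nonneg_right ?_ (by positivity)
    nlinarith [mul_nonneg hk hl, mul_nonneg hk (sq_nonneg l), sq_nonneg l]

lemma dph_dph_bound {k l r : ℝ} (hk : 0 < k) (hl : 0 < l) (hr : 0 < r) :
    |dph k r * dph l r / r / (k + l)| ≤ 8 * (k ^ 2 + k + 1) * (l ^ 2 + l + 1) * (1 + r ^ 2)⁻¹ := by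
  rw [abs_div, abs_div, abs_mul, abs_of_pos hr, abs_of_pos (by positivity : 0 < k + l)]
  refine (decay_bound (C := 4 * (k ^ 2 + k + 1) * (l ^ 2 + l + 1)) hr (by positivity) ?_ ?_).trans (le_of_eq (by ring))
  · intro _
    rw [div_le_iff₀ (by positivity), div_le_iff₀ hr]
    refine (mul_le_mul (dph_le3 hk.le hr) (dph_le2 hl.le hr) (abs_nonneg _) (by positivity)).trans ?_
    rw [show 2 * k ^ 2 * (2 * l ^ 3 * r) = 4 * k ^ 2 * l ^ 2 * l * r by ring]
    gcongr
    · linarith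
    · linarith
    · linarith
  · intro h1
    rw [div_le_iff₀ (by positivity), div_le_iff₀ hr]
    refine (mul_le_mul (dph_le1 hk.le hr) (dph_le1 hl.le hr) (abs_nonneg _) (by positivity)).trans ?_
    rw [show 2 * k / r * (2 * l / r) = 4 * k * 1 / r ^ 2 * l * 1 by field_simp; ring]
    gcongr
    · nlinarith
    · nlinarith
    · linarith

lemma integral_Ioi_ftc {f f' : ℝ → ℝ} {m n : ℝ} (a : ℝ) (hd : ∀ x, a < x → HasDerivAt f (f' x) x)
    (hi : IntegrableOn f' (Set.Ioi a)) (h0 : Tendsto f (𝓝[>] a) (𝓝 m)) (h1 : Tendsto f atTop (𝓝 n)) :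
    ∫ x in Set.Ioi a, f' x = n - m := by
  have := integral_Ioi_of_hasDerivAt_of_tendsto (f := Function.update f a m) (f' := f') (a := a) (m := n) ?_ ?_ hi ?_
  · simpa using this
  · rw [continuousWithinAt_update_same]
    rw [Set.Ici_sdiff_left]; exact h0
  · intro x hx
    refine (hd x hx).congr_of_eventuallyEq ?_
    filter_upwards [eventually_ne_nhds (ne_of_gt hx)] with y hy
    simp [Function.update_of_ne hy]
  · refine h1.congr' ?_
    filter_upwards [eventually_gt_atTop a] with y hy
    simp [Function.update_of_ne hy.ne']

lemma hasDerivAt_ph (k : ℝ) {r : ℝ} (hr : 0 < r) : HasDerivAt (ph k) (dph k r) r := by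
  have h1 : HasDerivAt (fun r => Real.sin (k * r)) (Real.cos (k * r) * k) r := by
    exact ((hasDerivAt_id r).const_mul k).sin.congr_deriv (by simp)
  convert! h1.div (hasDerivAt_id r) hr.ne' using 1
  rw [dph]; simp; field_simp

lemma hasDerivAt_dph (k : ℝ) {r : ℝ} (hr : 0 < r) :
    HasDerivAt (dph k) (- k ^ 2 * ph k r - 2 / r * dph k r) r := by
  have h1 : HasDerivAt (fun r => Real.sin (k * r)) (Real.cos (k * r) * k) r := by
    exact ((hasDerivAt_id r).const_mul k).sin.congr_deriv (by simp)
  have h2 : HasDerivAt (fun r => Real.cos (k * r)) (- Real.sin (k * r) * k) r := by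
    exact ((hasDerivAt_id r).const_mul k).cos.congr_deriv (by simp)
  convert! ((h2.const_mul k).div (hasDerivAt_id r) hr.ne').sub (h1.div ((hasDerivAt_id r).pow 2) (by simpa using hr.ne')) using 1
  rw [dph, ph]; simp; field_simp; ring

lemma measurable_ph : Measurable (fun p : ℝ × ℝ => ph p.1 p.2) := by unfold ph; fun_prop
lemma measurable_dph : Measurable (fun p : ℝ × ℝ => dph p.1 p.2) := by unfold dph; fun_prop

lemma measurable_ph' (k : ℝ) : Measurable (ph k) := by unfold ph; fun_prop
lemma measurable_dph' (k : ℝ) : Measurable (dph k) := by unfold dph; fun_prop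

lemma integrable_ph_dph {k l : ℝ} (hk : 0 ≤ k) (hl : 0 ≤ l) : Integrable (fun r => ph k r * dph l r) nuP := by
  refine (integrable_decay.const_mul (4 * (k + 1) * (l ^ 2 + l))).mono'
    ((measurable_ph' k).mul (measurable_dph' l)).aestronglyMeasurable ?_
  filter_upwards [nuP_pos] with r hr using ph_dph_bound hk hl hr

lemma integrable_dph_dph {k l : ℝ} (hk : 0 < k) (hl : 0 < l) : Integrable (fun r => dph k r * dph l r / r) nuP := by
  have h : Integrable (fun r => dph k r * dph l r / r / (k + l)) nuP := by
    refine (integrable_decay.const_mul (8 * (k ^ 2 + k + 1) * (l ^ 2 + l + 1))).mono'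
      ((((measurable_dph' k).mul (measurable_dph' l)).div measurable_id).div_const _).aestronglyMeasurable ?_
    filter_upwards [nuP_pos] with r hr using dph_dph_bound hk hl hr
  refine (h.mul_const (k + l)).congr (Eventually.of_forall fun r => ?_)
  have : k + l ≠ 0 := by positivity
  simp only; field_simp

lemma tendsto_ph_zero (k : ℝ) : Tendsto (ph k) (𝓝[>] 0) (𝓝 k) := by
  have h1 : HasDerivAt (fun r => Real.sin (k * r)) k 0 := by
    exact ((hasDerivAt_id (0:ℝ)).const_mul k).sin.congr_deriv (by simp)
  have := h1.tendsto_slope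
  have h2 := this.mono_left (nhdsWithin_mono 0 (fun x (hx : 0 < x) => hx.ne' : Set.Ioi (0:ℝ) ⊆ {0}ᶜ))
  refine h2.congr fun r => ?_
  simp [slope, ph, div_eq_inv_mul]

lemma tendsto_dph_zero {k : ℝ} (hk : 0 ≤ k) : Tendsto (dph k) (𝓝[>] 0) (𝓝 0) := by
  refine squeeze_zero_norm' (a := fun r => 2 * k ^ 3 * r) ?_ ?_
  · filter_upwards [self_mem_nhdsWithin] with r hr using dph_le2 hk hr
  · have : Tendsto (fun r : ℝ => 2 * k ^ 3 * r) (𝓝 0) (𝓝 (2 * k ^ 3 * 0)) := by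
      exact (continuous_const.mul continuous_id).tendsto 0
    rw [mul_zero] at this
    exact this.mono_left nhdsWithin_le_nhds

lemma tendsto_ph_top (k : ℝ) : Tendsto (ph k) atTop (𝓝 0) := by
  refine squeeze_zero_norm' (a := fun r => 1 / r) ?_ ?_
  · filter_upwards [eventually_gt_atTop 0] with r hr using ph_le2 hr
  · simpa using tendsto_inv_atTop_zero (𝕜 := ℝ)

lemma tendsto_dph_top {k : ℝ} (hk : 0 ≤ k) : Tendsto (dph k) atTop (𝓝 0) := by
  refine squeeze_zero_norm' (a := fun r => 2 * k * r⁻¹) ?_ ?_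
  · filter_upwards [eventually_gt_atTop 0] with r hr
    rw [← div_eq_mul_inv]; exact dph_le1 hk hr
  · simpa using (tendsto_inv_atTop_zero (𝕜 := ℝ)).const_mul (2 * k)

lemma kernel_identity {k l : ℝ} (hk : 0 < k) (hl : 0 < l) :
    k * (∫ r, ph k r * dph l r ∂nuP) + l * (∫ r, ph l r * dph k r ∂nuP)
      = - (k ^ 2 * l ^ 2 / (k + l)) - 4 * ∫ r, dph k r * dph l r / r / (k + l) ∂nuP := by
  have hkl : k + l ≠ 0 := by positivity
  have i1 := integrable_ph_dph hk.le hl.le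
  have i2 := integrable_ph_dph hl.le hk.le
  have i3 := integrable_dph_dph hk hl
  have key : ∫ r in Set.Ioi (0:ℝ), ((k + l) * k * (ph k r * dph l r) + (k + l) * l * (ph l r * dph k r)
      + 4 * (dph k r * dph l r / r)) = 0 - k ^ 2 * l ^ 2 := by
    refine integral_Ioi_ftc (f := fun r => - (dph k r * dph l r) + k * l * (ph k r * ph l r)) 0 ?_ ?_ ?_ ?_
    · intro r hr
      have hr : 0 < r := hr
      convert! (((hasDerivAt_dph k hr).mul (hasDerivAt_dph l hr)).neg.add
        (((hasDerivAt_ph k hr).mul (hasDerivAt_ph l hr)).const_mul (k * l))) using 1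
      field_simp; ring
    · exact ((i1.const_mul _).add (i2.const_mul _)).add (i3.const_mul _)
    · have := (((tendsto_dph_zero hk.le).mul (tendsto_dph_zero hl.le)).neg).add
        (((tendsto_ph_zero k).mul (tendsto_ph_zero l)).const_mul (k * l))
      convert! this using 2; ring
    · have := (((tendsto_dph_top hk.le).mul (tendsto_dph_top hl.le)).neg).add
        (((tendsto_ph_top k).mul (tendsto_ph_top l)).const_mul (k * l))
      convert! this using 2; ring
  have key2 : (k + l) * k * (∫ r, ph k r * dph l r ∂nuP) + (k + l) * l * (∫ r, ph l r * dph k r ∂nuP)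
      + 4 * (∫ r, dph k r * dph l r / r ∂nuP) = 0 - k ^ 2 * l ^ 2 := by
    have i12 : Integrable (fun a => (k + l) * k * (ph k a * dph l a) + (k + l) * l * (ph l a * dph k a)) nuP :=
      (i1.const_mul _).add (i2.const_mul _)
    rw [← key, ← integral_const_mul, ← integral_const_mul, ← integral_const_mul, ← integral_add (i1.const_mul _) (i2.const_mul _),
      ← integral_add i12 (i3.const_mul _)]
    rfl
  rw [integral_div]
  field_simp
  linear_combination key2

lemma ae_pos_prod : ∀ᵐ p ∂(nuP.prod nuP), 0 < p.1 ∧ 0 < p.2 := by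
  have h1 : ∀ᵐ p ∂(nuP.prod nuP), 0 < p.1 := Measure.quasiMeasurePreserving_fst.ae nuP_pos
  have h2 : ∀ᵐ p ∂(nuP.prod nuP), 0 < p.2 := Measure.quasiMeasurePreserving_snd.ae nuP_pos
  filter_upwards [h1, h2] with p a b using ⟨a, b⟩

lemma integral_exp_nuP {c : ℝ} (hc : 0 < c) : ∫ y, Real.exp (-(c * y)) ∂nuP = 1 / c := by
  have := integral_exp_mul_Ioi (a := -c) (by linarith) 0
  simp only [mul_zero, Real.exp_zero] at this
  rw [nuP]
  calc _ = ∫ x in Set.Ioi 0, Real.exp (-c * x) := by congr 1; ext; ring_nf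
    _ = _ := by rw [this]; rw [neg_div_neg_eq]

lemma integrable_exp_nuP {c : ℝ} (hc : 0 < c) : Integrable (fun y => Real.exp (-(c * y))) nuP := by
  have := integrableOn_exp_mul_Ioi (a := -c) (by linarith) 0
  refine this.congr (Eventually.of_forall fun y => ?_)
  simp

lemma quad_integrable {ψ : ℝ → ℝ} (hm : Measurable ψ) (h1 : Integrable ψ nuP)
    (h2 : Integrable (fun k => ψ k / k) nuP) :
    Integrable (fun p : ℝ × ℝ => ψ p.1 * ψ p.2 / (p.1 + p.2)) (nuP.prod nuP) := by
  refine (h1.norm.mul_prod h2.norm).mono' ?_ ?_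
  · have : Measurable (fun p : ℝ × ℝ => ψ p.1 * ψ p.2 / (p.1 + p.2)) := by fun_prop
    exact this.aestronglyMeasurable
  · filter_upwards [ae_pos_prod] with p hp
    obtain ⟨a, b⟩ := hp
    rw [Real.norm_eq_abs, abs_div, abs_mul, Real.norm_eq_abs, Real.norm_eq_abs, abs_div,
      abs_of_pos (by positivity : 0 < p.1 + p.2), abs_of_pos b, mul_div_assoc]
    gcongr
    linarith

lemma quad_repr {ψ : ℝ → ℝ} (hm : Measurable ψ) (h1 : Integrable ψ nuP)
    (h2 : Integrable (fun k => ψ k / k) nuP) :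
    Integrable (fun y => (∫ k, ψ k * Real.exp (-(k * y)) ∂nuP) ^ 2) nuP ∧
    ∫ p, ψ p.1 * ψ p.2 / (p.1 + p.2) ∂(nuP.prod nuP)
      = ∫ y, (∫ k, ψ k * Real.exp (-(k * y)) ∂nuP) ^ 2 ∂nuP := by
  have hq := quad_integrable hm h1 h2
  set F : (ℝ × ℝ) → ℝ → ℝ := fun p y => ψ p.1 * ψ p.2 * Real.exp (-((p.1 + p.2) * y)) with hF
  have hFm : Measurable (Function.uncurry F) := by
    simp only [hF, Function.uncurry_def]; fun_prop
  have hintg : Integrable (Function.uncurry F) ((nuP.prod nuP).prod nuP) := by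
    rw [integrable_prod_iff hFm.aestronglyMeasurable]
    constructor
    · filter_upwards [ae_pos_prod] with p hp
      have hp' : 0 < p.1 + p.2 := by linarith
      exact (integrable_exp_nuP hp').const_mul (ψ p.1 * ψ p.2)
    · refine hq.norm.congr ?_
      filter_upwards [ae_pos_prod] with p hp
      have hp' : 0 < p.1 + p.2 := by linarith
      simp only [hF, Function.uncurry_def, norm_mul, Real.norm_eq_abs, abs_of_pos (Real.exp_pos _)]
      rw [integral_const_mul, integral_exp_nuP hp', abs_div, abs_mul, abs_of_pos hp']
      ring
  have hsq : ∀ y, ∫ p, F p y ∂(nuP.prod nuP) = (∫ k, ψ k * Real.exp (-(k * y)) ∂nuP) ^ 2 := by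
    intro y
    rw [sq, ← integral_prod_mul]
    congr 1; ext p
    simp only [hF]
    rw [show -((p.1 + p.2) * y) = -(p.1 * y) + -(p.2 * y) by ring, Real.exp_add]; ring
  constructor
  · refine hintg.integral_prod_right.congr (Eventually.of_forall fun y => ?_)
    exact hsq y
  · calc _ = ∫ p, ∫ y, F p y ∂nuP ∂(nuP.prod nuP) := by
          refine integral_congr_ae ?_
          filter_upwards [ae_pos_prod] with p hp
          simp only [hF]
          rw [integral_const_mul, integral_exp_nuP (by linarith)]
          ring
      _ = ∫ y, ∫ p, F p y ∂(nuP.prod nuP) ∂nuP := integral_integral_swap hintg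
      _ = _ := by simp_rw [hsq]

lemma quad_nonneg {ψ : ℝ → ℝ} (hm : Measurable ψ) (h1 : Integrable ψ nuP)
    (h2 : Integrable (fun k => ψ k / k) nuP) :
    0 ≤ ∫ p, ψ p.1 * ψ p.2 / (p.1 + p.2) ∂(nuP.prod nuP) := by
  rw [(quad_repr hm h1 h2).2]
  exact integral_nonneg fun y => sq_nonneg _

lemma quad_zero {ψ : ℝ → ℝ} (hm : Measurable ψ) (h1 : Integrable ψ nuP)
    (h2 : Integrable (fun k => ψ k / k) nuP)
    (h0 : ∫ p, ψ p.1 * ψ p.2 / (p.1 + p.2) ∂(nuP.prod nuP) = 0) : ∫ k, ψ k ∂nuP = 0 := by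
  obtain ⟨hi, he⟩ := quad_repr hm h1 h2
  rw [h0] at he
  have hz := (integral_eq_zero_iff_of_nonneg (fun y => sq_nonneg _) hi).1 he.symm
  have hz' : ∀ᵐ y ∂(volume.restrict (Set.Ioi (0:ℝ))), (∫ k, ψ k * Real.exp (-(k * y)) ∂nuP) = 0 := by
    filter_upwards [hz] with y hy
    simpa using hy
  have hlim : Tendsto (fun y => ∫ k, ψ k * Real.exp (-(k * y)) ∂nuP) (𝓝[>] 0) (𝓝 (∫ k, ψ k ∂nuP)) := by
    refine tendsto_integral_filter_of_dominated_convergence (fun k => |ψ k|) ?_ ?_ h1.abs ?_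
    · refine Eventually.of_forall fun y => ?_
      have : Measurable (fun k => ψ k * Real.exp (-(k * y))) := by fun_prop
      exact this.aestronglyMeasurable
    · filter_upwards [self_mem_nhdsWithin] with y hy
      have hy : 0 < y := hy
      filter_upwards [nuP_pos] with k hk
      rw [norm_mul, Real.norm_eq_abs, Real.norm_eq_abs, abs_of_pos (Real.exp_pos _)]
      refine mul_le_of_le_one_right (abs_nonneg _) ?_
      rw [Real.exp_le_one_iff]
      have : 0 < k * y := by positivity
      linarith
    · refine Eventually.of_forall fun k => ?_
      have : Continuous (fun y => ψ k * Real.exp (-(k * y))) := by fun_prop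
      have := (this.tendsto 0).mono_left (nhdsWithin_le_nhds (s := Set.Ioi (0:ℝ)))
      simpa using this
  have hfreq : ∃ᶠ y in 𝓝[>] (0:ℝ), (∫ k, ψ k * Real.exp (-(k * y)) ∂nuP) = 0 := by
    intro hev
    obtain ⟨u, hu, hsub⟩ := (mem_nhdsGT_iff_exists_Ioo_subset).1 hev
    have hu : 0 < u := hu
    have h3 : ∀ᵐ y ∂(volume.restrict (Set.Ioo (0:ℝ) u)), False := by
      have h4 := ae_restrict_of_ae_restrict_of_subset (Set.Ioo_subset_Ioi_self : Set.Ioo (0:ℝ) u ⊆ Set.Ioi 0) hz'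
      filter_upwards [h4, ae_restrict_mem measurableSet_Ioo] with y hy1 hy2
      exact hsub hy2 hy1
    have h5 : (volume.restrict (Set.Ioo (0:ℝ) u)) = 0 := by
      rw [← ae_eq_bot]; exact eventually_false_iff_eq_bot.1 h3
    rw [Measure.restrict_eq_zero, Real.volume_Ioo] at h5
    simp at h5; linarith
  by_contra hne
  have hev := hlim.eventually_ne hne
  exact hfreq hev

lemma integrable_b_ph {b : ℝ → ℝ} (hm : Measurable b) (h0 : Integrable b nuP) {r : ℝ} (hr : 0 < r) :
    Integrable (fun k => b k * ph k r) nuP := by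
  refine (h0.norm.mul_const (1 / r)).mono' ?_ ?_
  · have : Measurable (fun k => b k * ph k r) := hm.mul (by unfold ph; fun_prop)
    exact this.aestronglyMeasurable
  · refine Eventually.of_forall fun k => ?_
    rw [norm_mul]
    gcongr
    exact ph_le2 hr

lemma integrable_b_dph {b : ℝ → ℝ} (hm : Measurable b) (h2 : Integrable (fun k => k ^ 2 * b k) nuP) {r : ℝ}
    (hr : 0 < r) : Integrable (fun k => b k * dph k r) nuP := by
  refine (h2.norm.const_mul 2).mono' ?_ ?_
  · have : Measurable (fun k => b k * dph k r) := hm.mul (by unfold dph; fun_prop)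
    exact this.aestronglyMeasurable
  · filter_upwards [nuP_pos] with k hk
    rw [norm_mul, norm_mul, norm_pow, Real.norm_eq_abs, Real.norm_eq_abs, Real.norm_eq_abs, abs_of_pos hk]
    calc _ ≤ |b k| * (2 * k ^ 2) := by gcongr; exact dph_le3 hk.le hr
      _ = _ := by ring

lemma hasDerivAt_f {b : ℝ → ℝ} (hm : Measurable b) (h0 : Integrable b nuP)
    (h2 : Integrable (fun k => k ^ 2 * b k) nuP) {r : ℝ} (hr : 0 < r) :
    HasDerivAt (fun r => ∫ k, b k * ph k r ∂nuP) (∫ k, b k * dph k r ∂nuP) r := by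
  refine (hasDerivAt_integral_of_dominated_loc_of_deriv_le (bound := fun k => 2 * ‖k ^ 2 * b k‖) (s := Set.Ioi 0)
    (F := fun r k => b k * ph k r) (F' := fun r k => b k * dph k r)
    (Ioi_mem_nhds hr) ?_ (integrable_b_ph hm h0 hr) (integrable_b_dph hm h2 hr).aestronglyMeasurable ?_
    (h2.norm.const_mul 2) ?_).2
  · filter_upwards [Ioi_mem_nhds hr] with x hx using (integrable_b_ph hm h0 hx).aestronglyMeasurable
  · filter_upwards [nuP_pos] with k hk x hx
    rw [norm_mul, norm_mul, norm_pow, Real.norm_eq_abs, Real.norm_eq_abs, Real.norm_eq_abs, abs_of_pos hk]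
    calc _ ≤ |b k| * (2 * k ^ 2) := by gcongr; exact dph_le3 hk.le hx
      _ = _ := by ring
  · exact Eventually.of_forall fun k x hx => (hasDerivAt_ph k hx).const_mul _

lemma f_le2 {b : ℝ → ℝ} (h0 : Integrable b nuP) {r : ℝ} (hr : 0 < r) :
    |∫ k, b k * ph k r ∂nuP| ≤ (∫ k, |b k| ∂nuP) / r := by
  rw [← integral_div, ← Real.norm_eq_abs]
  refine norm_integral_le_of_norm_le (h0.abs.div_const r) (Eventually.of_forall fun k => ?_)
  rw [norm_mul, Real.norm_eq_abs, Real.norm_eq_abs, div_eq_mul_one_div]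
  gcongr
  exact ph_le2 hr

lemma f'_le1 {b : ℝ → ℝ} (h1 : Integrable (fun k => k * b k) nuP) {r : ℝ} (hr : 0 < r) :
    |∫ k, b k * dph k r ∂nuP| ≤ (∫ k, 2 * |k * b k| ∂nuP) / r := by
  rw [← integral_div, ← Real.norm_eq_abs]
  refine norm_integral_le_of_norm_le ((h1.abs.const_mul 2).div_const r) ?_
  filter_upwards [nuP_pos] with k hk
  rw [norm_mul, Real.norm_eq_abs, Real.norm_eq_abs, abs_mul, abs_of_pos hk]
  calc _ ≤ |b k| * (2 * k / r) := by gcongr; exact dph_le1 hk.le hr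
    _ = _ := by ring

lemma f'_le3 {b : ℝ → ℝ} (h2 : Integrable (fun k => k ^ 2 * b k) nuP) {r : ℝ} (hr : 0 < r) :
    |∫ k, b k * dph k r ∂nuP| ≤ (∫ k, 2 * |k ^ 2 * b k| ∂nuP) := by
  rw [← Real.norm_eq_abs]
  refine norm_integral_le_of_norm_le ((h2.abs.const_mul 2)) ?_
  filter_upwards [nuP_pos] with k hk
  rw [norm_mul, Real.norm_eq_abs, Real.norm_eq_abs, abs_mul, abs_pow, abs_of_pos hk]
  calc _ ≤ |b k| * (2 * k ^ 2) := by gcongr; exact dph_le3 hk.le hr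
    _ = _ := by ring

lemma f_tendsto_top {b : ℝ → ℝ} (h0 : Integrable b nuP) :
    Tendsto (fun r => ∫ k, b k * ph k r ∂nuP) atTop (𝓝 0) := by
  refine squeeze_zero_norm' (a := fun r => (∫ k, |b k| ∂nuP) / r) ?_ ?_
  · filter_upwards [eventually_gt_atTop 0] with r hr using f_le2 h0 hr
  · exact tendsto_const_nhds.div_atTop tendsto_id

lemma ae_pos_prod3 : ∀ᵐ z ∂((nuP.prod nuP).prod nuP), (0 < z.1.1 ∧ 0 < z.1.2) ∧ 0 < z.2 := by
  have h1 : ∀ᵐ z ∂((nuP.prod nuP).prod nuP), 0 < z.1.1 ∧ 0 < z.1.2 :=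
    Measure.quasiMeasurePreserving_fst.ae ae_pos_prod
  have h2 : ∀ᵐ z ∂((nuP.prod nuP).prod nuP), 0 < z.2 := Measure.quasiMeasurePreserving_snd.ae nuP_pos
  filter_upwards [h1, h2] with p a b using ⟨a, b⟩

lemma morawetz {b : ℝ → ℝ} (hm : Measurable b) (h0 : Integrable b nuP)
    (h1 : Integrable (fun k => k * b k) nuP) (h2 : Integrable (fun k => k ^ 2 * b k) nuP)
    (hB : 0 ≤ ∫ r, (∫ k, k * b k * ph k r ∂nuP) * (∫ l, b l * dph l r ∂nuP) ∂nuP) :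
    ∀ r, 0 < r → ∫ k, b k * ph k r ∂nuP = 0 := by
  set β : ℝ → ℝ := fun k => (k ^ 2 + k + 1) * |b k| with hβ
  have hβi : Integrable β nuP := by
    refine ((h2.abs.add h1.abs).add h0.abs).congr ?_
    filter_upwards [nuP_pos] with k hk
    simp only [hβ, Pi.add_apply, abs_mul, abs_pow, abs_of_pos hk]
    ring
  have hdom : Integrable (fun z : (ℝ × ℝ) × ℝ => 8 * (β z.1.1 * β z.1.2 * (1 + z.2 ^ 2)⁻¹))
      ((nuP.prod nuP).prod nuP) := ((hβi.mul_prod hβi).mul_prod integrable_decay).const_mul 8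
  set G : (ℝ × ℝ) → ℝ → ℝ := fun p r => p.1 * b p.1 * b p.2 * (ph p.1 r * dph p.2 r) with hG
  set H : (ℝ × ℝ) → ℝ → ℝ := fun p r => b p.1 * b p.2 * (dph p.1 r * dph p.2 r / r / (p.1 + p.2)) with hH
  have hGm : Measurable (Function.uncurry G) := by
    simp only [hG, Function.uncurry_def, ph, dph]; fun_prop
  have hHm : Measurable (Function.uncurry H) := by
    simp only [hH, Function.uncurry_def, dph]; fun_prop
  have hGi : Integrable (Function.uncurry G) ((nuP.prod nuP).prod nuP) := by
    refine hdom.mono' hGm.aestronglyMeasurable ?_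
    filter_upwards [ae_pos_prod3] with z hz
    obtain ⟨⟨hk, hl⟩, hr⟩ := hz
    simp only [hG, hβ, Function.uncurry_def, Real.norm_eq_abs]
    rw [abs_mul, abs_mul, abs_mul, abs_of_pos hk]
    calc _ ≤ z.1.1 * |b z.1.1| * |b z.1.2| * (4 * (z.1.1 + 1) * (z.1.2 ^ 2 + z.1.2) * (1 + z.2 ^ 2)⁻¹) := by
          gcongr; exact ph_dph_bound hk.le hl.le hr
      _ = 4 * (((z.1.1 ^ 2 + z.1.1) * |b z.1.1|) * ((z.1.2 ^ 2 + z.1.2) * |b z.1.2|) * (1 + z.2 ^ 2)⁻¹) := by ring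
      _ ≤ _ := by
          have e1 : z.1.1 ^ 2 + z.1.1 ≤ z.1.1 ^ 2 + z.1.1 + 1 := by linarith
          have e2 : z.1.2 ^ 2 + z.1.2 ≤ z.1.2 ^ 2 + z.1.2 + 1 := by linarith
          have e3 : (4:ℝ) ≤ 8 := by norm_num
          exact mul_le_mul e3 (mul_le_mul_of_nonneg_right (mul_le_mul (mul_le_mul_of_nonneg_right e1 (abs_nonneg _))
            (mul_le_mul_of_nonneg_right e2 (abs_nonneg _)) (by positivity) (by positivity)) (by positivity))
            (by positivity) (by norm_num)
  have hHi : Integrable (Function.uncurry H) ((nuP.prod nuP).prod nuP) := by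
    refine hdom.mono' hHm.aestronglyMeasurable ?_
    filter_upwards [ae_pos_prod3] with z hz
    obtain ⟨⟨hk, hl⟩, hr⟩ := hz
    simp only [hH, hβ, Function.uncurry_def, Real.norm_eq_abs]
    rw [abs_mul, abs_mul]
    calc _ ≤ |b z.1.1| * |b z.1.2| * (8 * (z.1.1 ^ 2 + z.1.1 + 1) * (z.1.2 ^ 2 + z.1.2 + 1) * (1 + z.2 ^ 2)⁻¹) := by
          gcongr; exact dph_dph_bound hk hl hr
      _ = _ := by ring
  -- the Morawetz functional
  have hBG : ∫ r, (∫ k, k * b k * ph k r ∂nuP) * (∫ l, b l * dph l r ∂nuP) ∂nuP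
      = ∫ p, (∫ r, G p r ∂nuP) ∂(nuP.prod nuP) := by
    rw [integral_integral_swap hGi]
    congr 1; ext r
    rw [← integral_prod_mul]
    congr 1; ext p
    simp only [hG]; ring
  have hg1 : Integrable (fun p => ∫ r, G p r ∂nuP) (nuP.prod nuP) := hGi.integral_prod_left
  have hg2 : Integrable (fun p : ℝ × ℝ => ∫ r, G p.swap r ∂nuP) (nuP.prod nuP) := hg1.swap
  have hsw : ∫ p : ℝ × ℝ, (∫ r, G p.swap r ∂nuP) ∂(nuP.prod nuP) = ∫ p, (∫ r, G p r ∂nuP) ∂(nuP.prod nuP) :=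
    integral_prod_swap (fun p => ∫ r, G p r ∂nuP)
  have hh1 : Integrable (fun p => ∫ r, H p r ∂nuP) (nuP.prod nuP) := hHi.integral_prod_left
  have q1 : Measurable (fun k => k ^ 2 * b k) := by fun_prop
  have q2 : Integrable (fun k => k ^ 2 * b k / k) nuP := by
    refine h1.congr ?_
    filter_upwards [nuP_pos] with k hk
    field_simp
  have hD := quad_integrable q1 h2 q2
  have hD0 := quad_nonneg q1 h2 q2
  have key : ∀ᵐ p ∂(nuP.prod nuP), (∫ r, G p r ∂nuP) + (∫ r, G p.swap r ∂nuP)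
      = - ((p.1 ^ 2 * b p.1) * (p.2 ^ 2 * b p.2) / (p.1 + p.2)) - 4 * ∫ r, H p r ∂nuP := by
    filter_upwards [ae_pos_prod] with p hp
    have := kernel_identity hp.1 hp.2
    simp only [hG, hH, integral_const_mul, Prod.fst_swap, Prod.snd_swap]
    linear_combination (b p.1 * b p.2) * this
  have hintg := integral_congr_ae key
  have hDn : Integrable (fun p : ℝ × ℝ => -((p.1 ^ 2 * b p.1) * (p.2 ^ 2 * b p.2) / (p.1 + p.2))) (nuP.prod nuP) :=
    hD.neg
  rw [integral_add hg1 hg2, hsw, ← hBG, integral_sub hDn (hh1.const_mul 4), integral_neg,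
    integral_const_mul] at hintg
  -- second form
  have hT : ∀ r, 0 < r → Measurable (fun k => b k * dph k r) ∧ Integrable (fun k => b k * dph k r) nuP ∧
      Integrable (fun k => b k * dph k r / k) nuP := by
    intro r hr
    have hmm : Measurable (fun k => b k * dph k r) := hm.mul (by unfold dph; fun_prop)
    refine ⟨hmm, integrable_b_dph hm h2 hr, ?_⟩
    refine (h1.norm.const_mul 2).mono' (hmm.div measurable_id).aestronglyMeasurable ?_
    filter_upwards [nuP_pos] with k hk
    rw [norm_div, norm_mul, norm_mul, Real.norm_eq_abs, Real.norm_eq_abs, Real.norm_eq_abs, abs_of_pos hk,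
      div_le_iff₀ hk]
    calc _ ≤ |b k| * (2 * k ^ 2) := by gcongr; exact dph_le3 hk.le hr
      _ = _ := by ring
  have hHr : ∀ r, ∫ p, H p r ∂(nuP.prod nuP)
      = r⁻¹ * ∫ p : ℝ × ℝ, (b p.1 * dph p.1 r) * (b p.2 * dph p.2 r) / (p.1 + p.2) ∂(nuP.prod nuP) := by
    intro r
    rw [← integral_const_mul]
    congr 1; ext p
    simp only [hH, div_eq_mul_inv]; ring
  have hE : ∫ p, (∫ r, H p r ∂nuP) ∂(nuP.prod nuP) = ∫ r, (∫ p, H p r ∂(nuP.prod nuP)) ∂nuP :=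
    integral_integral_swap hHi
  have hEi : Integrable (fun r => ∫ p, H p r ∂(nuP.prod nuP)) nuP := hHi.integral_prod_right
  have hpos : 0 ≤ᵐ[nuP] (fun r => ∫ p, H p r ∂(nuP.prod nuP)) := by
    filter_upwards [nuP_pos] with r hr
    obtain ⟨a1, a2, a3⟩ := hT r hr
    simp only [hHr]
    exact mul_nonneg (by positivity) (quad_nonneg a1 a2 a3)
  have hE0 : 0 ≤ ∫ r, (∫ p, H p r ∂(nuP.prod nuP)) ∂nuP := integral_nonneg_of_ae hpos
  have hEz : ∫ r, (∫ p, H p r ∂(nuP.prod nuP)) ∂nuP = 0 := by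
    rw [hE] at hintg
    linarith
  have hz := (integral_eq_zero_iff_of_nonneg_ae hpos hEi).1 hEz
  have hfz : ∀ᵐ r ∂(volume.restrict (Set.Ioi (0:ℝ))), ∫ k, b k * dph k r ∂nuP = 0 := by
    change ∀ᵐ r ∂nuP, _
    filter_upwards [nuP_pos, hz] with r hr h
    obtain ⟨a1, a2, a3⟩ := hT r hr
    refine quad_zero a1 a2 a3 ?_
    simp only [hHr, Pi.zero_apply, mul_eq_zero, inv_eq_zero] at h
    rcases h with h | h
    · exact absurd h hr.ne'
    · exact h
  intro r hr
  have hfz' := ae_restrict_of_ae_restrict_of_subset (Set.Ioi_subset_Ioi hr.le) hfz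
  have hft := integral_Ioi_ftc (f := fun r => ∫ k, b k * ph k r ∂nuP) (f' := fun r => ∫ k, b k * dph k r ∂nuP) r
    (fun x hx => hasDerivAt_f hm h0 h2 (hr.trans hx)) ((integrable_zero ℝ ℝ _).congr (by
      filter_upwards [hfz'] with x hx using hx.symm))
    ((hasDerivAt_f hm h0 h2 hr).continuousAt.tendsto.mono_left nhdsWithin_le_nhds) (f_tendsto_top h0)
  rw [integral_congr_ae hfz', integral_zero] at hft
  linarith

lemma sign_inner {f f' : ℝ → ℝ} {C : ℝ} (hd : ∀ r, 0 < r → HasDerivAt f (f' r) r)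
    (hi : Integrable (fun r => f r * f' r) nuP) (hir : Integrable (fun r => f r * f' r / r) nuP)
    (hi2 : Integrable (fun r => f r ^ 2 / r ^ 2) nuP)
    (h0 : ∫ r, f r * f' r ∂nuP = 0) (hC : ∀ r, 0 < r → |f r| ≤ C / r) {s : ℝ} (hs : 0 < s)
    (hmi : Integrable (fun r => f r * f' r / max r s) nuP) :
    0 ≤ ∫ r, f r * f' r / max r s ∂nuP := by
  have hfc : Tendsto f atTop (𝓝 0) := by
    refine squeeze_zero_norm' (a := fun r => C / r) ?_ ?_
    · filter_upwards [eventually_gt_atTop 0] with r hr using hC r hr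
    · exact tendsto_const_nhds.div_atTop tendsto_id
  have hsub : Set.Ioi s ⊆ Set.Ioi 0 := Set.Ioi_subset_Ioi hs.le
  have e1 : ∫ r, f r * f' r / max r s ∂nuP = ∫ r, (f r * f' r / max r s - f r * f' r / s) ∂nuP := by
    rw [integral_sub hmi (hi.div_const s), integral_div, h0]; simp
  have e2 : ∫ r, (f r * f' r / max r s - f r * f' r / s) ∂nuP
      = ∫ r in Set.Ioi s, (f r * f' r / max r s - f r * f' r / s) := by
    rw [nuP]
    refine setIntegral_eq_of_subset_of_forall_sdiff_eq_zero measurableSet_Ioi hsub ?_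
    intro x hx
    have : x ≤ s := by simpa using hx.2
    rw [max_eq_right this, sub_self]
  have e3 : ∫ r in Set.Ioi s, (f r * f' r / max r s - f r * f' r / s)
      = ∫ r in Set.Ioi s, (f r * f' r / r - f r * f' r / s) := by
    refine setIntegral_congr_fun measurableSet_Ioi ?_
    intro x hx
    have : s ≤ x := le_of_lt hx
    simp only [max_eq_left this]
  have i1 : IntegrableOn (fun r => f r * f' r / r - f r * f' r / s) (Set.Ioi s) :=
    IntegrableOn.mono_set (hir.sub (hi.div_const s)) hsub
  have i2 : IntegrableOn (fun r => f r ^ 2 / r ^ 2 / 2) (Set.Ioi s) :=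
    IntegrableOn.mono_set (hi2.div_const 2) hsub
  have e4 := integral_Ioi_ftc (f := fun r => f r ^ 2 / 2 * (r⁻¹ - s⁻¹))
    (f' := fun r => (f r * f' r / r - f r * f' r / s) - f r ^ 2 / r ^ 2 / 2) (m := 0) (n := 0) s ?_ (i1.sub i2) ?_ ?_
  · rw [integral_sub i1 i2] at e4
    rw [e1, e2, e3]
    have : 0 ≤ ∫ r in Set.Ioi s, f r ^ 2 / r ^ 2 / 2 := integral_nonneg fun r => by positivity
    linarith
  · intro r hr
    have hr0 : 0 < r := hs.trans hr
    have := (((hd r hr0).pow 2).div_const 2).mul ((hasDerivAt_inv hr0.ne').sub_const s⁻¹)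
    refine this.congr_deriv ?_
    simp
    field_simp
    ring
  · have hc : ContinuousAt (fun r => f r ^ 2 / 2 * (r⁻¹ - s⁻¹)) s := by
      have := (hd s hs).continuousAt
      have h2 : ContinuousAt (fun r : ℝ => r⁻¹) s := continuousAt_inv₀ hs.ne'
      fun_prop
    have := hc.tendsto.mono_left (nhdsWithin_le_nhds (s := Set.Ioi s))
    simpa using this
  · have := ((hfc.pow 2).div_const 2).mul (tendsto_inv_atTop_zero.sub_const s⁻¹)
    simpa using this

lemma sign_lemma {Y : Type*} [MeasurableSpace Y] {m : Measure Y} [SFinite m] {ρ s : Y → ℝ}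
    (hρ0 : ∀ y, 0 ≤ ρ y) (hρ : Integrable ρ m) (hs : Measurable s) (hs0 : ∀ᵐ y ∂m, 0 < s y)
    {f f' g : ℝ → ℝ} {C : ℝ} (hC0 : 0 ≤ C) (hd : ∀ r, 0 < r → HasDerivAt f (f' r) r)
    (hf0 : Tendsto f (𝓝[>] 0) (𝓝 0)) (hC : ∀ r, 0 < r → |f r| ≤ C / r)
    (hC' : ∀ r, 0 < r → |f' r| ≤ C / r) (hCb : ∀ r, 0 < r → |f' r| ≤ C)
    (hg : ∀ r, 0 < r → g r = ((∫ y, ρ y / max r (s y) ∂m) - 1) * f r) :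
    0 ≤ ∫ r, g r * f' r ∂nuP := by
  have hfc : Tendsto f atTop (𝓝 0) := by
    refine squeeze_zero_norm' (a := fun r => C / r) ?_ ?_
    · filter_upwards [eventually_gt_atTop 0] with r hr using hC r hr
    · exact tendsto_const_nhds.div_atTop tendsto_id
  have hlin : ∀ r, 0 < r → |f r| ≤ C * r := by
    intro r hr
    have h1 : ∀ᶠ e in 𝓝[>] (0:ℝ), |f r - f e| ≤ C * r := by
      filter_upwards [self_mem_nhdsWithin, Ioo_mem_nhdsGT hr] with e he he2
      have he : 0 < e := he
      have := Convex.norm_image_sub_le_of_norm_hasDerivWithin_le (f := f) (f' := f') (C := C) (s := Set.Ioi 0)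
        (fun x hx => (hd x hx).hasDerivWithinAt) (fun x hx => hCb x hx) (convex_Ioi 0) he hr
      rw [Real.norm_eq_abs, Real.norm_eq_abs] at this
      refine this.trans ?_
      gcongr
      rw [abs_le]; constructor <;> linarith [he2.2]
    have h2 : Tendsto (fun e => |f r - f e|) (𝓝[>] 0) (𝓝 |f r - 0|) := (hf0.const_sub (f r)).abs
    rw [sub_zero] at h2
    exact le_of_tendsto h2 h1
  have hfm : AEStronglyMeasurable f nuP := by
    have : ContinuousOn f (Set.Ioi 0) := fun x hx => (hd x hx).continuousAt.continuousWithinAt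
    exact this.aestronglyMeasurable measurableSet_Ioi
  have hf'm : AEStronglyMeasurable f' nuP := by
    refine (measurable_deriv f).aestronglyMeasurable.congr ?_
    filter_upwards [nuP_pos] with r hr using (hd r hr).deriv
  have b1 : ∀ r, 0 < r → |f r * f' r| ≤ 2 * C ^ 2 * (1 + r ^ 2)⁻¹ := by
    intro r hr
    refine decay_bound hr (by positivity) (fun h => ?_) (fun h => ?_)
    · rw [abs_mul]
      calc _ ≤ (C * r) * C := by gcongr; exacts [hlin r hr, hCb r hr]
        _ ≤ (C * 1) * C := by gcongr
        _ = _ := by ring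
    · rw [abs_mul]
      calc _ ≤ (C / r) * (C / r) := by gcongr; exacts [hC r hr, hC' r hr]
        _ = _ := by ring
  have b2 : ∀ r, 0 < r → |f r * f' r / r| ≤ 2 * C ^ 2 * (1 + r ^ 2)⁻¹ := by
    intro r hr
    refine decay_bound hr (by positivity) (fun h => ?_) (fun h => ?_)
    · rw [abs_div, abs_mul, abs_of_pos hr, div_le_iff₀ hr]
      calc _ ≤ (C * r) * C := by gcongr; exacts [hlin r hr, hCb r hr]
        _ = _ := by ring
    · rw [abs_div, abs_mul, abs_of_pos hr]
      calc _ ≤ (C / r) * (C / r) / 1 := by gcongr; exacts [hC r hr, hC' r hr]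
        _ = _ := by ring
  have b3 : ∀ r, 0 < r → f r ^ 2 / r ^ 2 ≤ 2 * C ^ 2 * (1 + r ^ 2)⁻¹ := by
    intro r hr
    refine decay_bound hr (by positivity) (fun h => ?_) (fun h => ?_)
    · rw [div_le_iff₀ (by positivity), ← sq_abs (f r)]
      calc _ ≤ (C * r) ^ 2 := by gcongr; exact hlin r hr
        _ = _ := by ring
    · rw [← sq_abs (f r)]
      gcongr
      refine (hC r hr).trans ?_
      exact div_le_self hC0 h
  have hdec := integrable_decay.const_mul (2 * C ^ 2)
  have hi : Integrable (fun r => f r * f' r) nuP := by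
    refine hdec.mono' (hfm.mul hf'm) ?_
    filter_upwards [nuP_pos] with r hr using b1 r hr
  have hir : Integrable (fun r => f r * f' r / r) nuP := by
    refine hdec.mono' ?_ ?_
    · exact ((hfm.mul hf'm).mul measurable_inv.aestronglyMeasurable).congr
        (Eventually.of_forall fun r => by simp [div_eq_mul_inv])
    · filter_upwards [nuP_pos] with r hr using b2 r hr
  have hi2 : Integrable (fun r => f r ^ 2 / r ^ 2) nuP := by
    refine hdec.mono' ?_ ?_
    · exact ((hfm.pow 2).mul ((measurable_id.pow_const 2).inv).aestronglyMeasurable).congr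
        (Eventually.of_forall fun r => by simp [div_eq_mul_inv])
    · filter_upwards [nuP_pos] with r hr
      rw [Real.norm_eq_abs, abs_of_nonneg (by positivity)]
      exact b3 r hr
  have h0 : ∫ r, f r * f' r ∂nuP = 0 := by
    have := integral_Ioi_ftc (f := fun r => f r ^ 2 / 2) (f' := fun r => f r * f' r) (m := 0) (n := 0) 0 ?_ hi ?_ ?_
    · rw [nuP, this]; simp
    · intro r hr
      exact (((hd r hr).pow 2).div_const 2).congr_deriv (by simp; ring)
    · simpa using (hf0.pow 2).div_const 2
    · simpa using (hfc.pow 2).div_const 2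
  -- Fubini
  set F : ℝ → Y → ℝ := fun r y => f r * f' r * (ρ y / max r (s y)) with hF
  have hFi : Integrable (Function.uncurry F) (nuP.prod m) := by
    have hdom := (hdec.mul_prod hρ)
    refine hdom.mono' ?_ ?_
    · have a1 : AEStronglyMeasurable (fun z : ℝ × Y => f z.1 * f' z.1) (nuP.prod m) := (hfm.mul hf'm).comp_fst
      have a2 : AEStronglyMeasurable (fun z : ℝ × Y => ρ z.2) (nuP.prod m) := hρ.aestronglyMeasurable.comp_snd
      have a3 : Measurable (fun z : ℝ × Y => (max z.1 (s z.2))⁻¹) := by fun_prop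
      exact (a1.mul (a2.mul a3.aestronglyMeasurable)).congr
        (Eventually.of_forall fun z => by simp [hF, Function.uncurry_def, div_eq_mul_inv])
    · have h1 : ∀ᵐ z ∂(nuP.prod m), 0 < z.1 := Measure.quasiMeasurePreserving_fst.ae nuP_pos
      filter_upwards [h1] with z hz
      simp only [hF, Function.uncurry_def, Real.norm_eq_abs]
      have hmx : 0 < max z.1 (s z.2) := lt_max_of_lt_left hz
      rw [abs_mul, abs_div, abs_of_nonneg (hρ0 _), abs_of_pos hmx]
      calc _ ≤ |f z.1 * f' z.1| * (ρ z.2 / z.1) := by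
            gcongr
            · exact hρ0 _
            · exact le_max_left _ _
        _ = |f z.1 * f' z.1 / z.1| * ρ z.2 := by rw [abs_div, abs_of_pos hz]; ring
        _ ≤ _ := mul_le_mul_of_nonneg_right (b2 _ hz) (hρ0 _)
  have e1 : ∫ r, g r * f' r ∂nuP = ∫ r, ((∫ y, F r y ∂m) - f r * f' r) ∂nuP := by
    refine integral_congr_ae ?_
    filter_upwards [nuP_pos] with r hr
    rw [hg r hr]
    simp only [hF]
    rw [integral_const_mul]; ring
  have hFl : Integrable (fun r => ∫ y, F r y ∂m) nuP := hFi.integral_prod_left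
  rw [e1, integral_sub hFl hi, h0, sub_zero, integral_integral_swap hFi]
  refine integral_nonneg_of_ae ?_
  filter_upwards [hs0] with y hy
  have hmi : Integrable (fun r => f r * f' r / max r (s y)) nuP := by
    refine hdec.mono' ?_ ?_
    · have a3 : Measurable (fun r : ℝ => (max r (s y))⁻¹) := by fun_prop
      exact ((hfm.mul hf'm).mul a3.aestronglyMeasurable).congr
        (Eventually.of_forall fun r => by simp [div_eq_mul_inv])
    · filter_upwards [nuP_pos] with r hr
      refine le_trans ?_ (b2 r hr)
      rw [Real.norm_eq_abs, abs_div, abs_div, abs_of_pos hr, abs_of_pos (lt_max_of_lt_left hr)]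
      gcongr
      exact le_max_left _ _
  have := sign_inner hd hi hir hi2 h0 hC hy hmi
  have e5 : ∫ r, F r y ∂nuP = ρ y * ∫ r, f r * f' r / max r (s y) ∂nuP := by
    rw [← integral_const_mul]
    congr 1; ext r; simp only [hF]; ring
  simp only [e5, Pi.zero_apply]
  exact mul_nonneg (hρ0 y) this

/-- combination of the Morawetz identity and the sign lemma -/
lemma radial_vanish {Y : Type*} [MeasurableSpace Y] {m : Measure Y} [SFinite m] {ρ s : Y → ℝ}
    (hρ0 : ∀ y, 0 ≤ ρ y) (hρ : Integrable ρ m) (hs : Measurable s) (hs0 : ∀ᵐ y ∂m, 0 < s y)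
    {b : ℝ → ℝ} (hm : Measurable b) (h0 : Integrable b nuP)
    (h1 : Integrable (fun k => k * b k) nuP) (h2 : Integrable (fun k => k ^ 2 * b k) nuP)
    (hf0 : Tendsto (fun r => ∫ k, b k * ph k r ∂nuP) (𝓝[>] 0) (𝓝 0))
    (hg : ∀ r, 0 < r → ∫ k, k * b k * ph k r ∂nuP
      = ((∫ y, ρ y / max r (s y) ∂m) - 1) * ∫ k, b k * ph k r ∂nuP) :
    ∀ r, 0 < r → ∫ k, b k * ph k r ∂nuP = 0 := by
  refine morawetz hm h0 h1 h2 ?_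
  have c1 : 0 ≤ ∫ k, |b k| ∂nuP := integral_nonneg fun _ => abs_nonneg _
  have c2 : 0 ≤ ∫ k, 2 * |k * b k| ∂nuP := integral_nonneg fun _ => by positivity
  have c3 : 0 ≤ ∫ k, 2 * |k ^ 2 * b k| ∂nuP := integral_nonneg fun _ => by positivity
  refine sign_lemma (f := fun r => ∫ k, b k * ph k r ∂nuP) (f' := fun r => ∫ k, b k * dph k r ∂nuP)
    (C := (∫ k, |b k| ∂nuP) + (∫ k, 2 * |k * b k| ∂nuP) + ∫ k, 2 * |k ^ 2 * b k| ∂nuP)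
    hρ0 hρ hs hs0 (by positivity) (fun r hr => hasDerivAt_f hm h0 h2 hr) hf0 ?_ ?_ ?_ hg
  · intro r hr
    refine (f_le2 h0 hr).trans ?_
    gcongr; linarith
  · intro r hr
    refine (f'_le1 h1 hr).trans ?_
    gcongr; linarith
  · intro r hr
    refine (f'_le3 h2 hr).trans ?_
    linarith

lemma fourier_cont {f : Rd → ℂ} (hf : Integrable f) : Continuous (𝓕 f) :=
  VectorFourier.fourierIntegral_continuous Real.continuous_fourierChar continuous_inner hf

lemma fourier_bdd (f : Rd → ℂ) (ξ : Rd) : ‖𝓕 f ξ‖ ≤ ∫ x, ‖f x‖ :=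
  VectorFourier.norm_fourierIntegral_le_integral_norm _ _ _ _ _

lemma fourierInv_cont {f : Rd → ℂ} (hf : Integrable f) : Continuous (𝓕⁻ f) := by
  have : 𝓕⁻ f = fun x => 𝓕 f (-x) := by ext x; exact Real.fourierInv_eq_fourier_neg f x
  rw [this]
  exact (fourier_cont hf).comp continuous_neg

lemma fourierInv_bdd (f : Rd → ℂ) (ξ : Rd) : ‖𝓕⁻ f ξ‖ ≤ ∫ x, ‖f x‖ := by
  rw [Real.fourierInv_eq_fourier_neg]; exact fourier_bdd _ _

lemma fourier_flip {f g : Rd → ℂ} (hf : Integrable f) (hg : Integrable g) :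
    ∫ ξ, 𝓕 f ξ * g ξ = ∫ x, f x * 𝓕 g x := by
  have := VectorFourier.integral_fourierIntegral_smul_eq_flip (L := innerₗ Rd) (μ := volume) (ν := volume)
    Real.continuous_fourierChar continuous_inner hf hg
  rw [flip_innerₗ] at this
  exact this

lemma fourier_undef {f : Rd → ℂ} (hf : ¬ Integrable f) : 𝓕 f = 0 := by
  ext ξ
  rw [Real.fourier_eq]
  exact integral_undef (by rwa [Real.fourierIntegral_convergent_iff])

lemma fourierInv_undef {f : Rd → ℂ} (hf : ¬ Integrable f) : 𝓕⁻ f = 0 := by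
  ext x
  rw [Real.fourierInv_eq_fourier_neg, fourier_undef hf]; rfl

lemma inversion_ae {Q : Rd → ℂ} (hQ : Integrable Q) (hF : Integrable (𝓕 Q)) :
    Q =ᵐ[volume] 𝓕⁻ (𝓕 Q) := by
  have hPc : Continuous (𝓕⁻ (𝓕 Q)) := fourierInv_cont hF
  have hz : ∀ᵐ x ∂(volume : Measure Rd), Q x - 𝓕⁻ (𝓕 Q) x = 0 := by
    refine ae_eq_zero_of_integral_contDiff_smul_eq_zero
      (hQ.locallyIntegrable.sub hPc.locallyIntegrable) ?_
    intro g hg hgs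
    have hgc : ContDiff ℝ (⊤ : ℕ∞) (fun x => (g x : ℂ)) := Complex.ofRealCLM.contDiff.comp hg
    have hgcs : HasCompactSupport (fun x => (g x : ℂ)) := hgs.comp_left (g := fun r : ℝ => (r : ℂ)) (by simp)
    set G : SchwartzMap Rd ℂ := hgcs.toSchwartzMap hgc with hG
    have hGx : ∀ x, G x = (g x : ℂ) := fun x => rfl
    have hGi : Integrable (fun x => (g x : ℂ)) := G.integrable
    have i1 : Integrable (fun x => (g x : ℂ) * Q x) := by
      refine hQ.bdd_mul (c := SchwartzMap.seminorm ℝ 0 0 G) hGi.aestronglyMeasurable (Eventually.of_forall fun x => ?_)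
      exact SchwartzMap.norm_le_seminorm ℝ G x
    have i2 : Integrable (fun x => (g x : ℂ) * 𝓕⁻ (𝓕 Q) x) := by
      refine hGi.mul_bdd (c := ∫ x, ‖𝓕 Q x‖) hPc.aestronglyMeasurable (Eventually.of_forall fun x => ?_)
      exact fourierInv_bdd _ _
    have e1 : ∫ x, (g x : ℂ) * Q x = ∫ x, (𝓕⁻ G : SchwartzMap Rd ℂ) x * 𝓕 Q x := by
      rw [← fourier_flip (𝓕⁻ G : SchwartzMap Rd ℂ).integrable hQ]
      rw [← SchwartzMap.fourier_coe, FourierTransform.fourier_fourierInv_eq]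
      rfl
    have e2 : ∫ x, (g x : ℂ) * 𝓕⁻ (𝓕 Q) x = ∫ x, (𝓕⁻ G : SchwartzMap Rd ℂ) x * 𝓕 Q x := by
      rw [SchwartzMap.fourierInv_coe, Real.fourierInv_eq_fourier_comp_neg (G : Rd → ℂ)]
      rw [fourier_flip (f := fun x => G (-x)) G.integrable.comp_neg hF]
      rw [← integral_neg_eq_self]
      congr 1; ext x
      rw [Real.fourierInv_eq_fourier_neg, neg_neg, hGx]
    calc ∫ x, g x • (Q x - 𝓕⁻ (𝓕 Q) x) = ∫ x, ((g x : ℂ) * Q x - (g x : ℂ) * 𝓕⁻ (𝓕 Q) x) := by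
          congr 1; ext x; rw [Complex.real_smul, mul_sub]
      _ = 0 := by rw [integral_sub i1 i2, e1, e2, sub_self]
  filter_upwards [hz] with x hx using sub_eq_zero.1 hx

lemma symbol_eq (ξ : Rd) : ((Real.sqrt (‖ξ‖ ^ 2 + 0) : ℝ) : ℂ) = (‖ξ‖ : ℂ) := by
  rw [add_zero, Real.sqrt_sq (norm_nonneg _)]

lemma sqrtOp_eq (Q : Rd → ℂ) : sqrtOp 0 Q = 𝓕⁻ fun ξ => (‖ξ‖ : ℂ) * 𝓕 Q ξ := by
  rw [sqrtOp]; simp only [symbol_eq]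

/-- non-degenerate case: everything is integrable -/
lemma nondegenerate (Q : Rd → ℂ) (hQrad : IsRadial Q) (hQne : eLpNorm Q 2 volume ≠ 0)
    (hQeq : ∀ x : Rd, sqrtOp 0 Q x + Q x - newton (fun y => (‖Q y‖ : ℂ) ^ 2) x * Q x = 0) :
    Integrable Q ∧ Integrable (fun ξ : Rd => (‖ξ‖ : ℂ) * 𝓕 Q ξ) := by
  have key : sqrtOp 0 Q ≠ 0 := by
    intro h
    have : Q = 0 := by
      refine junk_case Q hQrad fun x => ?_
      have := hQeq x
      rwa [h, Pi.zero_apply, zero_add] at this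
    exact hQne (by rw [this]; simp)
  have h2 : Integrable (fun ξ : Rd => (‖ξ‖ : ℂ) * 𝓕 Q ξ) := by
    by_contra h
    exact key (by rw [sqrtOp_eq, fourierInv_undef h])
  refine ⟨?_, h2⟩
  by_contra h
  refine key ?_
  rw [sqrtOp_eq, fourier_undef h]
  ext x
  simp [Real.fourierInv_eq]

lemma fourier_integrable {Q : Rd → ℂ} (hQ : Integrable Q) (hG : Integrable (fun ξ : Rd => (‖ξ‖ : ℂ) * 𝓕 Q ξ)) :
    Integrable (𝓕 Q) := by
  have h1 : Integrable ((Metric.ball (0 : Rd) 1).indicator (fun _ => ∫ x, ‖Q x‖)) := by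
    rw [integrable_indicator_iff measurableSet_ball]
    exact integrableOn_const measure_ball_lt_top.ne
  refine (h1.add hG.norm).mono' (fourier_cont hQ).aestronglyMeasurable (Eventually.of_forall fun ξ => ?_)
  simp only [Pi.add_apply, norm_mul, Complex.norm_real, norm_norm]
  by_cases h : ξ ∈ Metric.ball (0 : Rd) 1
  · rw [Set.indicator_of_mem h]
    have := fourier_bdd Q ξ
    have : 0 ≤ ‖ξ‖ * ‖𝓕 Q ξ‖ := by positivity
    linarith [fourier_bdd Q ξ]
  · rw [Set.indicator_of_notMem h, zero_add]
    have : 1 ≤ ‖ξ‖ := by simpa using h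
    exact le_mul_of_one_le_left (norm_nonneg _) this

lemma fourier_radial {Q : Rd → ℂ} (hQ : IsRadial Q) : IsRadial (𝓕 Q) := by
  intro x y h
  obtain ⟨A, rfl⟩ := exists_isometry h
  rw [← Real.fourier_comp_linearIsometry]
  have : Q ∘ A = Q := by
    ext z
    exact hQ _ _ (by simp)
  rw [this]

lemma fourierInv_radial {Q : Rd → ℂ} (hQ : IsRadial Q) : IsRadial (𝓕⁻ Q) := by
  intro x y h
  rw [Real.fourierInv_eq_fourier_neg, Real.fourierInv_eq_fourier_neg]
  exact fourier_radial hQ _ _ (by simpa using h)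

lemma radMeas_pos : ∀ᵐ s ∂radMeas, 0 < s :=
  (withDensity_absolutelyContinuous _ _).ae_le nuP_pos

lemma integral_radMeas (g : ℝ → ℂ) : ∫ s, g s ∂radMeas = ∫ s, (s ^ 2 : ℝ) • g s ∂nuP := by
  rw [radMeas, integral_withDensity_eq_integral_toReal_smul (by fun_prop) (by simp)]
  rw [nuP]
  congr 1; ext s
  rw [ENNReal.toReal_ofReal (by positivity)]

lemma integrable_radMeas (g : ℝ → ℂ) : Integrable g radMeas ↔ Integrable (fun s => (s ^ 2 : ℝ) • g s) nuP := by
  rw [radMeas, integrable_withDensity_iff_integrable_smul' (by fun_prop) (by simp), nuP]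
  refine integrable_congr (Eventually.of_forall fun s => ?_)
  simp only
  rw [ENNReal.toReal_ofReal (by positivity)]

lemma theta_integral {a : ℝ} (ha : a ≠ 0) :
    ∫ θ, Complex.exp ((a * Real.cos θ : ℝ) * I) ∂thetaMeas = ((2 * Real.sin a / a : ℝ) : ℂ) := by
  rw [thetaMeas, integral_withDensity_eq_integral_toReal_smul (by fun_prop) (by simp)]
  have e1 : ∫ θ in Set.Ioo 0 Real.pi, (ENNReal.ofReal (Real.sin θ)).toReal • Complex.exp ((a * Real.cos θ : ℝ) * I)
      = ∫ θ in Set.Ioo 0 Real.pi, (Real.sin θ : ℂ) * Complex.exp ((a * Real.cos θ : ℝ) * I) := by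
    refine setIntegral_congr_fun measurableSet_Ioo fun θ hθ => ?_
    rw [ENNReal.toReal_ofReal (Real.sin_pos_of_mem_Ioo hθ).le, Complex.real_smul]
  have haI : (a : ℂ) * I ≠ 0 := mul_ne_zero (by exact_mod_cast ha) I_ne_zero
  rw [e1, ← integral_Ioc_eq_integral_Ioo, ← intervalIntegral.integral_of_le Real.pi_pos.le]
  rw [intervalIntegral.integral_eq_sub_of_hasDerivAt
    (f := fun θ : ℝ => - Complex.exp ((a * Real.cos θ : ℝ) * I) / (a * I))]
  · simp only [Real.cos_pi, Real.cos_zero, mul_neg, mul_one]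
    push_cast
    rw [Complex.sin]
    field_simp
    rw [show -(a * I) = (-(a:ℂ)) * I by ring]
    have : I ^ 2 = -1 := I_sq
    ring_nf
    simp [this]
  · intro θ _
    have h1 : HasDerivAt (fun θ : ℝ => ((a * Real.cos θ : ℝ) : ℂ)) ((a * -Real.sin θ : ℝ) : ℂ) θ :=
      ((Real.hasDerivAt_cos θ).const_mul a).ofReal_comp
    have h2 := ((h1.mul_const I).cexp.neg).div_const (a * I)
    refine h2.congr_deriv ?_
    push_cast
    have ha' : (a : ℂ) ≠ 0 := by exact_mod_cast ha
    field_simp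
  · apply Continuous.intervalIntegrable
    fun_prop

lemma angular_integral {a : ℝ} (ha : a ≠ 0) :
    ∫ q : ℝ × ℝ, Complex.exp ((a * Real.cos q.1 : ℝ) * I) ∂(thetaMeas.prod phiMeas)
      = ((4 * Real.pi * Real.sin a / a : ℝ) : ℂ) := by
  have := integral_prod_mul (μ := thetaMeas) (ν := phiMeas)
    (fun θ : ℝ => Complex.exp ((a * Real.cos θ : ℝ) * I)) (fun _ => (1:ℂ))
  simp only [mul_one] at this
  rw [this, theta_integral ha]
  have h2 : ∫ _ : ℝ, (1:ℂ) ∂phiMeas = ((2 * Real.pi : ℝ) : ℂ) := by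
    rw [integral_const, phiMeas, Measure.real]
    simp
    rw [ENNReal.toReal_ofReal (by positivity)]
    push_cast; ring
  rw [h2, ← Complex.ofReal_mul]
  congr 1; ring

lemma sph_radial {F : Rd → ℂ} (hrad : IsRadial F) {s : ℝ} (hs : 0 < s) (q : ℝ × ℝ) :
    F (sphMap (s, q)) = F (axis s) :=
  hrad _ _ (by rw [norm_sphMap hs.le, norm_axis, abs_of_pos hs])

lemma ae_pos_sph : ∀ᵐ z ∂(radMeas.prod (thetaMeas.prod phiMeas)), 0 < z.1 :=
  Measure.quasiMeasurePreserving_fst.ae radMeas_pos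

lemma angular_real_pos : 0 < (thetaMeas.prod phiMeas).real Set.univ := by
  rw [← Set.univ_prod_univ, measureReal_prod_prod, measureReal_def, thetaMeas_univ, measureReal_def, phiMeas]
  simp only [Measure.restrict_apply_univ, Real.volume_Ioo]
  rw [ENNReal.toReal_ofReal (by linarith [Real.pi_pos])]
  simp [Real.pi_pos]

lemma radial_integrable {F : Rd → ℂ} (hF : Integrable F) (hrad : IsRadial F) :
    Integrable (fun s => (s ^ 2 : ℝ) • F (axis s)) nuP := by
  rw [← integrable_radMeas (fun s => F (axis s))]
  have h1 : Integrable (F ∘ sphMap) (radMeas.prod (thetaMeas.prod phiMeas)) :=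
    sphMap_mp.integrable_comp_of_integrable hF
  have h2 := h1.integral_prod_left
  have h3 : (fun s => ∫ q, (F ∘ sphMap) (s, q) ∂(thetaMeas.prod phiMeas)) =ᵐ[radMeas]
      fun s => (thetaMeas.prod phiMeas).real Set.univ • F (axis s) := by
    filter_upwards [radMeas_pos] with s hs
    simp only [Function.comp_apply, sph_radial hrad hs, integral_const]
  have h4 := (h2.congr h3).smul ((thetaMeas.prod phiMeas).real Set.univ)⁻¹
  refine h4.congr (Eventually.of_forall fun s => ?_)
  simp only [Pi.smul_apply, smul_smul]
  rw [inv_mul_cancel₀ angular_real_pos.ne', one_smul]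

lemma fourierInv_sph {F : Rd → ℂ} (hF : Integrable F) (hrad : IsRadial F) {R : ℝ} (hR : 0 < R) :
    𝓕⁻ F (axis (R / (2 * Real.pi))) = ∫ k, (4 * Real.pi * k * ph k R : ℝ) • F (axis k) ∂nuP := by
  set r := R / (2 * Real.pi) with hr
  have hr0 : 0 < r := by positivity
  have hR2 : R = 2 * Real.pi * r := by rw [hr]; field_simp
  set K : Rd → ℂ := fun v => Complex.exp ((2 * Real.pi * inner ℝ v (axis r) : ℝ) * I) * F v with hK
  have hKi : Integrable K := by
    refine hF.bdd_mul (c := 1) ?_ (Eventually.of_forall fun v => ?_)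
    · have : Continuous (fun v : Rd => Complex.exp ((2 * Real.pi * inner ℝ v (axis r) : ℝ) * I)) := by fun_prop
      exact this.aestronglyMeasurable
    · rw [Complex.norm_exp_ofReal_mul_I]
  have e1 : 𝓕⁻ F (axis r) = ∫ v, K v := Real.fourierInv_eq' F (axis r)
  have hmap := sphMap_mp.map_eq
  have hKa : AEStronglyMeasurable K (Measure.map sphMap (radMeas.prod (thetaMeas.prod phiMeas))) := by
    rw [hmap]; exact hKi.aestronglyMeasurable
  have e2 : ∫ v, K v = ∫ z, K (sphMap z) ∂(radMeas.prod (thetaMeas.prod phiMeas)) := by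
    rw [← integral_map continuous_sphMap.aemeasurable hKa, hmap]
  have hci : Integrable (fun z => K (sphMap z)) (radMeas.prod (thetaMeas.prod phiMeas)) :=
    sphMap_mp.integrable_comp_of_integrable hKi
  rw [e1, e2, integral_prod _ hci, integral_radMeas]
  refine integral_congr_ae ?_
  filter_upwards [nuP_pos] with s hs
  have ha : 2 * Real.pi * (r * s) ≠ 0 := by positivity
  have e3 : ∫ q, K (sphMap (s, q)) ∂(thetaMeas.prod phiMeas)
      = ((4 * Real.pi * Real.sin (2 * Real.pi * (r * s)) / (2 * Real.pi * (r * s)) : ℝ) : ℂ) * F (axis s) := by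
    rw [← angular_integral ha, ← integral_mul_const]
    congr 1; ext q
    simp only [hK, sph_radial hrad hs, inner_axis_sphMap]
    congr 3; ring
  simp only [e3, Complex.real_smul]
  rw [← mul_assoc, ← Complex.ofReal_mul]
  congr 2
  rw [ph, hR2, show 2 * Real.pi * (r * s) = s * (2 * Real.pi * r) by ring]
  field_simp

lemma continuous_axis : Continuous axis := by
  unfold axis
  exact continuous_cart.comp (by fun_prop)

lemma axis_zero : axis 0 = 0 := by
  rw [← norm_eq_zero, norm_axis, abs_zero]

/-- the potential is continuous away from the origin -/
lemma potential_cont {ρ : Rd → ℝ} (h0 : ∀ y, 0 ≤ ρ y) (hρ : Integrable ρ) :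
    ContinuousOn (fun x : Rd => ∫ y, ρ y / max ‖x‖ ‖y‖) ({0}ᶜ : Set Rd) := by
  intro x hx
  have hx0 : 0 < ‖x‖ := norm_pos_iff.2 (by simpa using hx)
  refine ContinuousAt.continuousWithinAt ?_
  have hev : ∀ᶠ z in 𝓝 x, ‖x‖ / 2 < ‖z‖ :=
    (continuous_norm.tendsto x).eventually (lt_mem_nhds (by linarith))
  refine continuousAt_of_dominated (bound := fun y => ρ y / (‖x‖ / 2)) ?_ ?_ (hρ.div_const _) ?_
  · refine Eventually.of_forall fun z => ?_
    have : Measurable (fun y : Rd => (max ‖z‖ ‖y‖)⁻¹) := by fun_prop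
    exact (hρ.aestronglyMeasurable.mul this.aestronglyMeasurable).congr
      (Eventually.of_forall fun y => by simp [div_eq_mul_inv])
  · filter_upwards [hev] with z hz
    refine Eventually.of_forall fun y => ?_
    have hz0 : 0 < ‖z‖ := by linarith
    rw [Real.norm_eq_abs, abs_div, abs_of_nonneg (h0 y), abs_of_pos (lt_max_of_lt_left hz0)]
    gcongr
    · exact h0 y
    · exact hz.le.trans (le_max_left _ _)
  · refine Eventually.of_forall fun y => ?_
    have : max ‖x‖ ‖y‖ ≠ 0 := (lt_max_of_lt_left hx0).ne'
    exact ContinuousAt.div (by fun_prop) (by fun_prop) this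

lemma phase_core {Q : Rd → ℂ} (hQrad : IsRadial Q) (hQi : Integrable Q)
    (hGi : Integrable (fun ξ : Rd => (‖ξ‖ : ℂ) * 𝓕 Q ξ))
    {ρ : Rd → ℝ} (hρ0 : ∀ y, 0 ≤ ρ y) (hρ : Integrable ρ)
    (heq : ∀ x : Rd, x ≠ 0 → 𝓕⁻ (fun ξ : Rd => (‖ξ‖ : ℂ) * 𝓕 Q ξ) x
      = (((∫ y, ρ y / max ‖x‖ ‖y‖) - 1 : ℝ) : ℂ) * 𝓕⁻ (𝓕 Q) x)
    (c : ℂ) (hc : ((starRingEnd ℂ) c * 𝓕⁻ (𝓕 Q) 0).im = 0) (x : Rd) :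
    ((starRingEnd ℂ) c * 𝓕⁻ (𝓕 Q) x).im = 0 := by
  have hFi : Integrable (𝓕 Q) := fourier_integrable hQi hGi
  have hFrad := fourier_radial hQrad
  have hFc := fourier_cont hQi
  have hGrad : IsRadial (fun ξ : Rd => (‖ξ‖ : ℂ) * 𝓕 Q ξ) := fun x y h => by simp only [h, hFrad x y h]
  set P := 𝓕⁻ (𝓕 Q) with hP
  have hPrad : IsRadial P := fourierInv_radial hFrad
  have hPc : Continuous P := fourierInv_cont hFi
  set S := 𝓕⁻ (fun ξ : Rd => (‖ξ‖ : ℂ) * 𝓕 Q ξ) with hS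
  set L : ℂ →L[ℝ] ℝ := Complex.imCLM.comp (ContinuousLinearMap.mul ℝ ℂ ((starRingEnd ℂ) c)) with hL
  have hLx : ∀ z, L z = ((starRingEnd ℂ) c * z).im := fun z => rfl
  set q : ℝ → ℂ := fun k => 𝓕 Q (axis k) with hq
  have hqc : Continuous q := hFc.comp continuous_axis
  set b : ℝ → ℝ := fun k => 4 * Real.pi * k * L (q k) with hb
  have hbm : Measurable b := by
    have : Continuous b := by simp only [hb]; fun_prop
    exact this.measurable
  have i2 := radial_integrable hFi hFrad
  have i3 := radial_integrable hGi hGrad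
  have i2' : Integrable (fun k => k ^ 2 * ‖q k‖) nuP := by
    refine i2.norm.congr ?_
    filter_upwards [nuP_pos] with k hk
    rw [norm_smul, norm_pow, Real.norm_eq_abs, abs_of_pos hk]
  have i3' : Integrable (fun k => k ^ 3 * ‖q k‖) nuP := by
    refine i3.norm.congr ?_
    filter_upwards [nuP_pos] with k hk
    rw [norm_smul, norm_pow, Real.norm_eq_abs, abs_of_pos hk, norm_mul, norm_axis, abs_of_pos hk,
      Complex.norm_real, Real.norm_eq_abs, abs_of_pos hk]
    ring
  have i1' : Integrable (fun k => k * ‖q k‖) nuP := by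
    have h1 : Integrable ((Set.Ioo (0:ℝ) 1).indicator (fun _ => ∫ x, ‖Q x‖)) nuP := by
      rw [integrable_indicator_iff measurableSet_Ioo]
      refine integrableOn_const ?_
      rw [nuP]
      refine ne_top_of_le_ne_top ?_ (Measure.restrict_apply_le _ _)
      simp
    refine (h1.add i2').mono' ?_ ?_
    · have : Continuous (fun k => k * ‖q k‖) := by fun_prop
      exact this.aestronglyMeasurable
    · filter_upwards [nuP_pos] with k hk
      rw [norm_mul, norm_norm, Real.norm_eq_abs, abs_of_pos hk, Pi.add_apply]
      by_cases h : k ∈ Set.Ioo (0:ℝ) 1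
      · rw [Set.indicator_of_mem h]
        have a1 := fourier_bdd Q (axis k)
        have a2 : k * ‖q k‖ ≤ 1 * ‖q k‖ := by gcongr; exact h.2.le
        have a3 : 0 ≤ k ^ 2 * ‖q k‖ := by positivity
        have a4 : ‖q k‖ ≤ ∫ x, ‖Q x‖ := a1
        linarith
      · rw [Set.indicator_of_notMem h, zero_add]
        have : 1 ≤ k := by
          by_contra h'
          exact h ⟨hk, not_le.1 h'⟩
        have : k ≤ k ^ 2 := by nlinarith
        gcongr
  have hbn : ∀ k, 0 < k → |b k| ≤ 4 * Real.pi * ‖L‖ * (k * ‖q k‖) := by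
    intro k hk
    simp only [hb]
    rw [abs_mul, abs_of_pos (by positivity : 0 < 4 * Real.pi * k)]
    have := L.le_opNorm (q k)
    rw [Real.norm_eq_abs] at this
    calc _ ≤ 4 * Real.pi * k * (‖L‖ * ‖q k‖) := by gcongr
      _ = _ := by ring
  have hb0 : Integrable b nuP := by
    refine (i1'.const_mul (4 * Real.pi * ‖L‖)).mono' hbm.aestronglyMeasurable ?_
    filter_upwards [nuP_pos] with k hk using hbn k hk
  have hb1 : Integrable (fun k => k * b k) nuP := by
    refine (i2'.const_mul (4 * Real.pi * ‖L‖)).mono' (by fun_prop) ?_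
    filter_upwards [nuP_pos] with k hk
    rw [norm_mul, Real.norm_eq_abs, Real.norm_eq_abs, abs_of_pos hk]
    calc _ ≤ k * (4 * Real.pi * ‖L‖ * (k * ‖q k‖)) := by gcongr; exact hbn k hk
      _ = _ := by ring
  have hb2 : Integrable (fun k => k ^ 2 * b k) nuP := by
    refine (i3'.const_mul (4 * Real.pi * ‖L‖)).mono' (by fun_prop) ?_
    filter_upwards [nuP_pos] with k hk
    rw [norm_mul, norm_pow, Real.norm_eq_abs, Real.norm_eq_abs, abs_of_pos hk]
    calc _ ≤ k ^ 2 * (4 * Real.pi * ‖L‖ * (k * ‖q k‖)) := by gcongr; exact hbn k hk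
      _ = _ := by ring
  -- general integrability of the radial representation
  have hrep : ∀ (F : Rd → ℂ), Integrable F → IsRadial F → ∀ R, 0 < R →
      L (𝓕⁻ F (axis (R / (2 * Real.pi)))) = ∫ k, 4 * Real.pi * k * ph k R * L (F (axis k)) ∂nuP := by
    intro F hF hFr R hR
    have hi := radial_integrable hF hFr
    have hi' : Integrable (fun k => (4 * Real.pi * k * ph k R : ℝ) • F (axis k)) nuP := by
      have hm : AEStronglyMeasurable (fun k : ℝ => 4 * Real.pi * (ph k R / k)) nuP := by
        have : Measurable (fun k : ℝ => 4 * Real.pi * (ph k R / k)) := by unfold ph; fun_prop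
        exact this.aestronglyMeasurable
      have := hi.bdd_smul (4 * Real.pi) (φ := fun k : ℝ => 4 * Real.pi * (ph k R / k)) hm ?_
      · refine this.congr ?_
        filter_upwards [nuP_pos] with k hk
        simp only [Pi.smul_apply', smul_smul]
        congr 1
        field_simp
      · filter_upwards [nuP_pos] with k hk
        rw [Real.norm_eq_abs, abs_mul, abs_div, abs_of_pos hk, abs_of_pos (by positivity : 0 < 4 * Real.pi)]
        refine mul_le_of_le_one_right (by positivity) ?_
        rw [div_le_one hk]
        exact ph_le1 hk.le hR
    rw [fourierInv_sph hF hFr hR, ← L.integral_comp_comm hi']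
    congr 1; ext k
    rw [map_smul, smul_eq_mul]
  have hfP : ∀ R, 0 < R → ∫ k, b k * ph k R ∂nuP = L (P (axis (R / (2 * Real.pi)))) := by
    intro R hR
    rw [hrep _ hFi hFrad R hR]
    congr 1; ext k
    simp only [hb, hq]; ring
  have hgS : ∀ R, 0 < R → ∫ k, k * b k * ph k R ∂nuP = L (S (axis (R / (2 * Real.pi)))) := by
    intro R hR
    rw [hrep _ hGi hGrad R hR]
    refine integral_congr_ae ?_
    filter_upwards [nuP_pos] with k hk
    rw [norm_axis, abs_of_pos hk, ← Complex.real_smul, map_smul, smul_eq_mul]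
    simp only [hb, hq]; ring
  have hmain := radial_vanish (m := (volume : Measure Rd)) (ρ := fun y => 2 * Real.pi * ρ y)
    (s := fun y => 2 * Real.pi * ‖y‖) (fun y => mul_nonneg (by positivity) (hρ0 y)) (hρ.const_mul _) (by fun_prop)
    (by
      filter_upwards [compl_mem_ae_iff.2 (measure_singleton (0 : Rd))] with y hy
      have : 0 < ‖y‖ := norm_pos_iff.2 (by simpa using hy)
      positivity) hbm hb0 hb1 hb2 ?_ ?_
  · by_cases hx : x = 0
    · rw [hx]; exact hc
    · have hx0 : 0 < ‖x‖ := norm_pos_iff.2 hx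
      have h1 := hmain (2 * Real.pi * ‖x‖) (by positivity)
      rw [hfP _ (by positivity), hLx] at h1
      rw [← h1]
      congr 2
      refine hPrad _ _ ?_
      rw [norm_axis, mul_div_cancel_left₀ _ (by positivity), abs_norm]
  · have hcont : Continuous (fun R : ℝ => L (P (axis (R / (2 * Real.pi))))) :=
      L.continuous.comp (hPc.comp (continuous_axis.comp (by fun_prop)))
    have h1 := (hcont.tendsto 0).mono_left (nhdsWithin_le_nhds (s := Set.Ioi (0:ℝ)))
    simp only [zero_div, axis_zero] at h1
    rw [hLx, hc] at h1
    refine h1.congr' ?_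
    filter_upwards [self_mem_nhdsWithin] with R hR using (hfP R hR).symm
  · intro R hR
    rw [hfP R hR, hgS R hR]
    have hn : ‖axis (R / (2 * Real.pi))‖ = R / (2 * Real.pi) := by
      rw [norm_axis, abs_of_pos (by positivity)]
    have hne : axis (R / (2 * Real.pi)) ≠ 0 := by
      rw [← norm_ne_zero_iff, hn]; positivity
    rw [heq _ hne, ← Complex.real_smul, map_smul, smul_eq_mul, hn]
    congr 2
    congr 1; ext y
    have : max R (2 * Real.pi * ‖y‖) = 2 * Real.pi * max (R / (2 * Real.pi)) ‖y‖ := by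
      rw [mul_max_of_nonneg _ _ (by positivity)]
      congr 1
      field_simp
    rw [this, mul_div_mul_left _ _ (by positivity)]

/-- structure of solutions: continuous, bounded, integrable, constant phase -/
lemma structure_thm (Q : Rd → ℂ) (hQrad : IsRadial Q) (hQne : eLpNorm Q 2 volume ≠ 0)
    (hQeq : ∀ x : Rd, sqrtOp 0 Q x + Q x - newton (fun y => (‖Q y‖ : ℂ) ^ 2) x * Q x = 0) :
    ∃ P : Rd → ℂ, Continuous P ∧ Integrable P ∧ (∃ C, ∀ x, ‖P x‖ ≤ C) ∧ Q =ᵐ[volume] P ∧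
      ∃ c : ℂ, c ≠ 0 ∧ ∀ x, ((starRingEnd ℂ) c * P x).im = 0 := by
  obtain ⟨hQi, hGi⟩ := nondegenerate Q hQrad hQne hQeq
  have hFi : Integrable (𝓕 Q) := fourier_integrable hQi hGi
  have hae := inversion_ae hQi hFi
  set P := 𝓕⁻ (𝓕 Q) with hP
  have hPc : Continuous P := fourierInv_cont hFi
  have hPi : Integrable P := hQi.congr hae
  have hPb : ∀ x, ‖P x‖ ≤ ∫ ξ, ‖𝓕 Q ξ‖ := fourierInv_bdd _
  refine ⟨P, hPc, hPi, ⟨_, hPb⟩, hae, ?_⟩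
  have hρ0 : ∀ y, 0 ≤ ‖Q y‖ ^ 2 := fun y => by positivity
  have hρ : Integrable (fun y => ‖Q y‖ ^ 2) := by
    refine (hQi.norm.const_mul (∫ ξ, ‖𝓕 Q ξ‖)).mono' (hQi.aestronglyMeasurable.norm.pow 2) ?_
    filter_upwards [hae] with y hy
    rw [norm_pow, norm_norm, sq]
    gcongr
    rw [hy]; exact hPb y
  have hW : ∀ x, newton (fun y => (‖Q y‖ : ℂ) ^ 2) x = ((∫ y, ‖Q y‖ ^ 2 / max ‖x‖ ‖y‖ : ℝ) : ℂ) := by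
    intro x
    rw [newton_eq_ofReal, newton_real (fun y => ‖Q y‖ ^ 2) hρ0 (fun x y h => by simp only [hQrad x y h])
      hρ.aestronglyMeasurable.aemeasurable]
  have hSc : Continuous (𝓕⁻ (fun ξ : Rd => (‖ξ‖ : ℂ) * 𝓕 Q ξ)) := fourierInv_cont hGi
  have heq : ∀ x : Rd, x ≠ 0 → 𝓕⁻ (fun ξ : Rd => (‖ξ‖ : ℂ) * 𝓕 Q ξ) x
      = (((∫ y, ‖Q y‖ ^ 2 / max ‖x‖ ‖y‖) - 1 : ℝ) : ℂ) * P x := by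
    have hon : Set.EqOn (𝓕⁻ (fun ξ : Rd => (‖ξ‖ : ℂ) * 𝓕 Q ξ))
        (fun x => (((∫ y, ‖Q y‖ ^ 2 / max ‖x‖ ‖y‖) - 1 : ℝ) : ℂ) * P x) ({0}ᶜ : Set Rd) := by
      refine Measure.eqOn_open_of_ae_eq (μ := volume) ?_ isOpen_compl_singleton hSc.continuousOn ?_
      · refine ae_restrict_of_ae ?_
        filter_upwards [hae] with x hx
        have := hQeq x
        rw [sqrtOp_eq, hW, hx] at this
        push_cast
        linear_combination this
      · have h1 := potential_cont hρ0 hρ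
        have h2 : ContinuousOn (fun x : Rd => (((∫ y, ‖Q y‖ ^ 2 / max ‖x‖ ‖y‖) - 1 : ℝ) : ℂ)) ({0}ᶜ : Set Rd) :=
          Complex.continuous_ofReal.comp_continuousOn (h1.sub continuousOn_const)
        exact h2.mul hPc.continuousOn
    intro x hx
    exact hon (by simpa using hx)
  have core := phase_core hQrad hQi hGi hρ0 hρ heq
  by_cases h0 : P 0 = 0
  · refine ⟨1, one_ne_zero, fun x => core 1 ?_ x⟩
    change ((starRingEnd ℂ) 1 * P 0).im = 0
    rw [h0]; simp
  · refine ⟨P 0, h0, fun x => core (P 0) ?_ x⟩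
    change ((starRingEnd ℂ) (P 0) * P 0).im = 0
    rw [← Complex.normSq_eq_conj_mul_self, Complex.ofReal_im]

lemma sq_eLpNorm (f : Rd → ℂ) : (eLpNorm f 2 volume) ^ 2 = ∫⁻ x, ‖f x‖ₑ ^ 2 := by
  rw [eLpNorm_eq_lintegral_rpow_enorm_toReal (by norm_num) (by norm_num)]
  rw [← ENNReal.rpow_natCast, ← ENNReal.rpow_mul]
  simp

lemma lint_scale (g : Rd → ℝ≥0∞) {μ : ℝ} (hμ : 0 < μ) :
    ∫⁻ x, g (μ • x) = ENNReal.ofReal ((μ ^ 3)⁻¹) * ∫⁻ x, g x := by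
  have h := Measure.map_addHaar_smul (volume : Measure Rd) hμ.ne'
  have e : MeasurableEmbedding (fun x : Rd => μ • x) :=
    (Homeomorph.smulOfNeZero μ hμ.ne').measurableEmbedding
  rw [← e.lintegral_map, show (fun x : Rd => μ • x) = (μ • ·) from rfl, h, lintegral_smul_measure]
  rw [finrank_euclideanSpace_fin, abs_of_pos (by positivity)]
  rfl

lemma rpow_32_sq {μ : ℝ} (hμ : 0 < μ) : (μ ^ (3 / 2 : ℝ)) ^ 2 = μ ^ 3 := by
  rw [← Real.rpow_natCast, ← Real.rpow_mul hμ.le, ← Real.rpow_natCast]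
  norm_num

lemma scale_norm (f : Rd → ℂ) {μ : ℝ} (hμ : 0 < μ) :
    eLpNorm (qScale f μ) 2 volume = eLpNorm f 2 volume := by
  have h : (eLpNorm (qScale f μ) 2 volume) ^ 2 = (eLpNorm f 2 volume) ^ 2 := by
    rw [sq_eLpNorm, sq_eLpNorm]
    unfold qScale
    simp only [enorm_mul, mul_pow]
    rw [lintegral_const_mul' _ _ (by simp), lint_scale (fun x => ‖f x‖ₑ ^ 2) hμ, ← mul_assoc]
    have : ‖((μ ^ (3 / 2 : ℝ) : ℝ) : ℂ)‖ₑ ^ 2 = ENNReal.ofReal (μ ^ 3) := by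
      rw [← ofReal_norm_eq_enorm, Complex.norm_real, ← ENNReal.ofReal_pow (norm_nonneg _),
        Real.norm_eq_abs, sq_abs, rpow_32_sq hμ]
    rw [this, ← ENNReal.ofReal_mul (by positivity), mul_inv_cancel₀ (by positivity)]
    simp
  exact (ENNReal.pow_right_strictMono (n := 2) (by norm_num)).injective h

lemma qScale_comp (f : Rd → ℂ) {a b : ℝ} (ha : 0 < a) (hb : 0 < b) :
    qScale (qScale f a) b = qScale f (b * a) := by
  ext x
  unfold qScale
  rw [smul_smul, Real.mul_rpow hb.le ha.le, mul_comm a b]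
  push_cast
  ring

lemma qScale_congr {f g : Rd → ℂ} (h : f =ᵐ[volume] g) {μ : ℝ} (hμ : 0 < μ) :
    qScale f μ =ᵐ[volume] qScale g μ := by
  have q : Measure.QuasiMeasurePreserving (fun x : Rd => μ • x) volume volume := by
    refine ⟨by fun_prop, ?_⟩
    rw [show (fun x : Rd => μ • x) = (μ • ·) from rfl, Measure.map_addHaar_smul _ hμ.ne']
    exact Measure.smul_absolutelyContinuous
  filter_upwards [q.ae_eq_comp h] with x hx
  unfold qScale
  simp only [Function.comp] at hx
  rw [hx]

lemma scale_tendsto {P : Rd → ℂ} (hc : Continuous P) (hi : Integrable P)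
    {C : ℝ} (hC : ∀ x, ‖P x‖ ≤ C) :
    Tendsto (fun l : ℝ => eLpNorm (fun x => qScale P l x - P x) 2 volume) (𝓝 1) (𝓝 0) := by
  have hC0 : 0 ≤ C := (norm_nonneg _).trans (hC 0)
  have hqc : ∀ l : ℝ, Continuous (qScale P l) := fun l => by unfold qScale; fun_prop
  have h2 : Integrable (fun x => ‖P x‖ ^ 2) := by
    refine (hi.norm.const_mul C).mono' (by fun_prop) ?_
    filter_upwards with x
    rw [norm_pow, norm_norm, sq]
    gcongr
    exact hC x
  have h2l : ∀ l : ℝ, 0 < l → Integrable (fun x => ‖qScale P l x‖ ^ 2) := by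
    intro l hl
    unfold qScale
    simp only [norm_mul, mul_pow]
    exact (h2.comp_smul hl.ne').const_mul _
  have hA : ∀ l : ℝ, 0 < l → ∫ x, ‖qScale P l x‖ ^ 2 = ∫ x, ‖P x‖ ^ 2 := by
    intro l hl
    unfold qScale
    simp only [norm_mul, mul_pow]
    rw [integral_const_mul, Measure.integral_comp_smul volume (fun x => ‖P x‖ ^ 2),
      finrank_euclideanSpace_fin, abs_of_pos (by positivity), Complex.norm_real,
      Real.norm_eq_abs, sq_abs, rpow_32_sq hl, smul_eq_mul, ← mul_assoc,
      mul_inv_cancel₀ (by positivity), one_mul]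
  have hxb : ∀ l : ℝ, 0 < l → ∀ x, ‖(qScale P l x * (starRingEnd ℂ) (P x)).re‖
      ≤ l ^ (3 / 2 : ℝ) * C * ‖P x‖ := by
    intro l hl x
    refine (Complex.abs_re_le_norm _).trans ?_
    unfold qScale
    rw [norm_mul, norm_mul, RCLike.norm_conj, Complex.norm_real, Real.norm_eq_abs,
      abs_of_pos (by positivity)]
    gcongr
    exact hC _
  have hxc : ∀ l : ℝ, Continuous (fun x => (qScale P l x * (starRingEnd ℂ) (P x)).re) :=
    fun l => Complex.continuous_re.comp ((hqc l).mul (Complex.continuous_conj.comp hc))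
  have hxi : ∀ l : ℝ, 0 < l → Integrable (fun x => (qScale P l x * (starRingEnd ℂ) (P x)).re) := by
    intro l hl
    exact (hi.norm.const_mul _).mono' (hxc l).aestronglyMeasurable (Eventually.of_forall (hxb l hl))
  have hexp : ∀ l x, ‖qScale P l x - P x‖ ^ 2 = ‖qScale P l x‖ ^ 2 + ‖P x‖ ^ 2
      - 2 * (qScale P l x * (starRingEnd ℂ) (P x)).re := by
    intro l x
    simp only [← Complex.normSq_eq_norm_sq]
    exact Complex.normSq_sub _ _
  have hintg : ∀ l : ℝ, 0 < l → ∫ x, ‖qScale P l x - P x‖ ^ 2 =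
      (∫ x, ‖P x‖ ^ 2) + (∫ x, ‖P x‖ ^ 2) - 2 * ∫ x, (qScale P l x * (starRingEnd ℂ) (P x)).re := by
    intro l hl
    simp only [hexp]
    have hadd : Integrable (fun x => ‖qScale P l x‖ ^ 2 + ‖P x‖ ^ 2) := (h2l l hl).add h2
    rw [integral_sub hadd ((hxi l hl).const_mul 2), integral_add (h2l l hl) h2, hA l hl,
      integral_const_mul]
  have hlim : Tendsto (fun l : ℝ => ∫ x, (qScale P l x * (starRingEnd ℂ) (P x)).re) (𝓝 1)
      (𝓝 (∫ x, ‖P x‖ ^ 2)) := by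
    refine tendsto_integral_filter_of_dominated_convergence
      (fun x => (2 : ℝ) ^ (3 / 2 : ℝ) * C * ‖P x‖) ?_ ?_ (hi.norm.const_mul _) ?_
    · exact Eventually.of_forall fun l => (hxc l).aestronglyMeasurable
    · filter_upwards [Ioo_mem_nhds (show (0 : ℝ) < 1 by norm_num) (show (1 : ℝ) < 2 by norm_num)] with l hl
      refine Eventually.of_forall fun x => (hxb l hl.1 x).trans ?_
      gcongr
      · exact hl.1.le
      · exact hl.2.le
    · refine Eventually.of_forall fun x => ?_
      have h1 : ‖P x‖ ^ 2 = (qScale P 1 x * (starRingEnd ℂ) (P x)).re := by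
        unfold qScale
        simp [Complex.mul_conj, Complex.normSq_eq_norm_sq, -Complex.mul_re]
        norm_cast
      rw [h1]
      refine ContinuousAt.tendsto (f := fun l : ℝ => (qScale P l x * (starRingEnd ℂ) (P x)).re) ?_
      unfold qScale
      have hp : ContinuousAt (fun l : ℝ => l ^ (3 / 2 : ℝ)) 1 :=
        Real.continuousAt_rpow_const _ _ (Or.inl one_ne_zero)
      have hP : ContinuousAt (fun l : ℝ => P (l • x)) 1 := by fun_prop
      exact Complex.continuous_re.continuousAt.comp
        (((Complex.continuous_ofReal.continuousAt.comp hp).mul hP).mul continuousAt_const)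
  have hz : Tendsto (fun l : ℝ => ENNReal.ofReal (∫ x, ‖qScale P l x - P x‖ ^ 2)) (𝓝 1) (𝓝 0) := by
    rw [← ENNReal.ofReal_zero]
    refine ENNReal.tendsto_ofReal ?_
    have : Tendsto (fun l : ℝ => (∫ x, ‖P x‖ ^ 2) + (∫ x, ‖P x‖ ^ 2)
        - 2 * ∫ x, (qScale P l x * (starRingEnd ℂ) (P x)).re) (𝓝 1) (𝓝 0) := by
      have := (tendsto_const_nhds (x := (∫ x, ‖P x‖ ^ 2) + (∫ x, ‖P x‖ ^ 2))).sub (hlim.const_mul 2)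
      convert! this using 2
      ring
    refine this.congr' ?_
    filter_upwards [lt_mem_nhds (show (0 : ℝ) < 1 by norm_num)] with l hl
    exact (hintg l hl).symm
  have hsq : Tendsto (fun l : ℝ => (eLpNorm (fun x => qScale P l x - P x) 2 volume) ^ 2) (𝓝 1) (𝓝 0) := by
    refine hz.congr' ?_
    filter_upwards [lt_mem_nhds (show (0 : ℝ) < 1 by norm_num)] with l hl
    rw [sq_eLpNorm, ofReal_integral_eq_lintegral_ofReal ?_ (Eventually.of_forall fun x => by positivity)]
    · congr 1; ext x
      rw [ENNReal.ofReal_pow (norm_nonneg _), ofReal_norm_eq_enorm]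
    · simp only [hexp]
      exact ((h2l l hl).add h2).sub ((hxi l hl).const_mul 2)
  have := (ENNReal.continuous_rpow_const (y := 1 / 2)).tendsto 0 |>.comp hsq
  rw [ENNReal.zero_rpow_of_pos (by norm_num)] at this
  refine this.congr fun l => ?_
  simp only [Function.comp]
  rw [← ENNReal.rpow_natCast, ← ENNReal.rpow_mul]
  norm_num

lemma phase_sq (n : ℕ) {t : ℝ} (ht : 0 < t) {c : ℂ} (hc : c ≠ 0) {z w : ℂ}
    (hz : ((starRingEnd ℂ) c * z).im = 0) (hw : ((starRingEnd ℂ) c * w).im = 0) :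
    ‖Complex.exp (Complex.I * (t * (Real.pi / (2 * t) * ((n : ℝ) + 1) ^ 2) : ℝ)) * z -
      Complex.exp (Complex.I * (t * (Real.pi / (2 * t) * (n : ℝ) ^ 2) : ℝ)) * w‖ ^ 2
      = ‖z‖ ^ 2 + ‖w‖ ^ 2 := by
  set a : ℝ := t * (Real.pi / (2 * t) * ((n : ℝ) + 1) ^ 2) with ha
  set b : ℝ := t * (Real.pi / (2 * t) * (n : ℝ) ^ 2) with hb
  have hab : a = b + (Real.pi / 2 + n * Real.pi) := by
    rw [ha, hb]; field_simp; ring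
  have hcos : Real.cos (a - b) = 0 := by
    rw [hab, add_sub_cancel_left, Real.cos_add_nat_mul_pi]; simp
  have hzw : (z * (starRingEnd ℂ) w).im = 0 := by
    have h1 : ((starRingEnd ℂ) c * z) * (starRingEnd ℂ) ((starRingEnd ℂ) c * w)
        = (Complex.normSq c : ℂ) * (z * (starRingEnd ℂ) w) := by
      rw [map_mul, Complex.conj_conj, ← Complex.mul_conj]; ring
    have h2 := congrArg Complex.im h1
    rw [Complex.im_ofReal_mul, Complex.mul_im, Complex.conj_im, hz, hw] at h2
    simp only [neg_zero, mul_zero, zero_mul, add_zero] at h2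
    have := Complex.normSq_pos.2 hc
    rcases mul_eq_zero.1 h2.symm with h | h
    · exact absurd h this.ne'
    · exact h
  simp only [← Complex.normSq_eq_norm_sq]
  rw [Complex.normSq_sub]
  have n1 : ∀ s : ℝ, Complex.normSq (Complex.exp (Complex.I * s)) = 1 := by
    intro s
    rw [Complex.normSq_eq_norm_sq, mul_comm, Complex.norm_exp_ofReal_mul_I]; norm_num
  rw [Complex.normSq_mul, Complex.normSq_mul, n1, n1]
  have h3 : Complex.exp (Complex.I * a) * z * (starRingEnd ℂ) (Complex.exp (Complex.I * b) * w)
      = Complex.exp ((a - b : ℝ) * Complex.I) * (z * (starRingEnd ℂ) w) := by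
    rw [map_mul, ← Complex.exp_conj, map_mul, Complex.conj_I, Complex.conj_ofReal]
    have : Complex.exp ((a - b : ℝ) * Complex.I) = Complex.exp (Complex.I * a) * Complex.exp (-Complex.I * b) := by
      rw [← Complex.exp_add]; congr 1; push_cast; ring
    rw [this]; ring
  rw [h3, Complex.mul_re, hzw, Complex.exp_ofReal_mul_I_re, hcos]
  ring

/-- solitary wave computations and failure of uniform continuity of the flow
map of the massless boson star equation on
`M = {φ ∈ L² : φ radial, ‖φ‖_{L²}² ≥ ‖Q‖_{L²}²}`. -/
theorem uniform_continuity_fails_massless (Q : Rd → ℂ)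
    (hQH : HsNorm (1 / 2) Q < ⊤) (hQrad : IsRadial Q)
    (hQne : eLpNorm Q 2 volume ≠ 0)
    (hQeq : ∀ x : Rd,
      sqrtOp 0 Q x + Q x - newton (fun y => (‖Q y‖ : ℂ) ^ 2) x * Q x = 0) :
    -- (i) the rescaling preserves the `L²` norm
    (∀ μ : ℝ, 0 < μ → eLpNorm (qScale Q μ) 2 volume = eLpNorm Q 2 volume) ∧
    -- (ii) for fixed `t > 0` and `μ₁(n) = (π/2t)(n+1)², μ₂(n) = (π/2t)n²`:
    (∀ t : ℝ, 0 < t →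
      (∀ n : ℕ, 1 ≤ n →
        (eLpNorm (fun x =>
            solWave Q (Real.pi / (2 * t) * ((n : ℝ) + 1) ^ 2) t x -
            solWave Q (Real.pi / (2 * t) * (n : ℝ) ^ 2) t x) 2 volume) ^ 2 =
          2 * (eLpNorm Q 2 volume) ^ 2) ∧
      Tendsto (fun n : ℕ =>
          eLpNorm (fun x =>
            qScale Q (Real.pi / (2 * t) * ((n : ℝ) + 1) ^ 2) x -
            qScale Q (Real.pi / (2 * t) * (n : ℝ) ^ 2) x) 2 volume)
        atTop (𝓝 0)) ∧
    -- (iii) consequently, any flow map `φ ↦ u(t)` (which must map the solitary wave data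
    -- `Q_μ` to `e^{itμ}Q_μ`) fails to be uniformly continuous on `M` in the `L²` norm
    (∀ t : ℝ, 0 < t → ∀ S : (Rd → ℂ) → (Rd → ℂ),
      (∀ μ : ℝ, 0 < μ → S (qScale Q μ) = solWave Q μ t) →
      ¬ (∀ ε : ℝ, 0 < ε → ∃ δ : ℝ, 0 < δ ∧
          ∀ φ ψ : Rd → ℂ,
            IsRadial φ → (eLpNorm Q 2 volume) ^ 2 ≤ (eLpNorm φ 2 volume) ^ 2 →
            IsRadial ψ → (eLpNorm Q 2 volume) ^ 2 ≤ (eLpNorm ψ 2 volume) ^ 2 →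
            eLpNorm (fun x => φ x - ψ x) 2 volume < ENNReal.ofReal δ →
            eLpNorm (fun x => S φ x - S ψ x) 2 volume < ENNReal.ofReal ε)) := by
  obtain ⟨P, hPc, hPi, ⟨C, hC⟩, hQP, c, hc0, hcP⟩ := structure_thm Q hQrad hQne hQeq
  have hi : ∀ μ : ℝ, 0 < μ → eLpNorm (qScale Q μ) 2 volume = eLpNorm Q 2 volume :=
    fun μ hμ => scale_norm Q hμ
  have hpos : ∀ t : ℝ, 0 < t → ∀ n : ℕ, 1 ≤ n → 0 < Real.pi / (2 * t) * (n : ℝ) ^ 2 := by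
    intro t ht n hn
    have : (0 : ℝ) < n := by exact_mod_cast hn
    positivity
  have hpos' : ∀ t : ℝ, 0 < t → ∀ n : ℕ, 0 < Real.pi / (2 * t) * ((n : ℝ) + 1) ^ 2 := by
    intro t ht n
    positivity
  have hscP : ∀ (μ : ℝ) (x : Rd), ((starRingEnd ℂ) c * qScale P μ x).im = 0 := by
    intro μ x
    unfold qScale
    rw [mul_left_comm, Complex.im_ofReal_mul, hcP, mul_zero]
  have hii1 : ∀ t : ℝ, 0 < t → ∀ n : ℕ, 1 ≤ n →
        (eLpNorm (fun x =>
            solWave Q (Real.pi / (2 * t) * ((n : ℝ) + 1) ^ 2) t x -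
            solWave Q (Real.pi / (2 * t) * (n : ℝ) ^ 2) t x) 2 volume) ^ 2 =
          2 * (eLpNorm Q 2 volume) ^ 2 := by
    intro t ht n hn
    have h1 := qScale_congr hQP (hpos' t ht n)
    have h2 := qScale_congr hQP (hpos t ht n hn)
    rw [sq_eLpNorm]
    calc _ = ∫⁻ x, (‖qScale P (Real.pi / (2 * t) * ((n : ℝ) + 1) ^ 2) x‖ₑ ^ 2
            + ‖qScale P (Real.pi / (2 * t) * (n : ℝ) ^ 2) x‖ₑ ^ 2) := by
          refine lintegral_congr_ae ?_
          filter_upwards [h1, h2] with x e1 e2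
          unfold solWave
          rw [e1, e2]
          simp only [← ofReal_norm_eq_enorm, ← ENNReal.ofReal_pow (norm_nonneg _)]
          rw [← ENNReal.ofReal_add (by positivity) (by positivity),
            phase_sq n ht hc0 (hscP _ x) (hscP _ x)]
      _ = _ := by
          have hm : Measurable (fun x => ‖qScale P (Real.pi / (2 * t) * ((n : ℝ) + 1) ^ 2) x‖ₑ ^ 2) := by
            unfold qScale
            have : Continuous (fun x : Rd => (((Real.pi / (2 * t) * ((n : ℝ) + 1) ^ 2) ^ (3 / 2 : ℝ) : ℝ) : ℂ) *
              P ((Real.pi / (2 * t) * ((n : ℝ) + 1) ^ 2) • x)) := by fun_prop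
            exact this.measurable.enorm.pow_const 2
          rw [lintegral_add_left hm, ← sq_eLpNorm, ← sq_eLpNorm, ← eLpNorm_congr_ae h1,
            ← eLpNorm_congr_ae h2, hi _ (hpos' t ht n), hi _ (hpos t ht n hn), two_mul]
  have hii2 : ∀ t : ℝ, 0 < t → Tendsto (fun n : ℕ =>
          eLpNorm (fun x =>
            qScale Q (Real.pi / (2 * t) * ((n : ℝ) + 1) ^ 2) x -
            qScale Q (Real.pi / (2 * t) * (n : ℝ) ^ 2) x) 2 volume)
        atTop (𝓝 0) := by
    intro t ht
    have hl : Tendsto (fun n : ℕ => (1 + 1 / (n : ℝ)) ^ 2) atTop (𝓝 1) := by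
      have := ((tendsto_one_div_atTop_nhds_zero_nat (𝕜 := ℝ)).const_add 1).pow 2
      simpa using this
    refine ((scale_tendsto hPc hPi hC).comp hl).congr' ?_
    filter_upwards [eventually_ge_atTop 1] with n hn
    have hn0 : (0 : ℝ) < n := by exact_mod_cast hn
    have hl0 : (0 : ℝ) < (1 + 1 / (n : ℝ)) ^ 2 := by positivity
    have h1 := qScale_congr hQP (hpos' t ht n)
    have h2 := qScale_congr hQP (hpos t ht n hn)
    simp only [Function.comp]
    have h12 := eLpNorm_congr_ae (p := 2) (h1.sub h2)
    refine Eq.trans ?_ h12.symm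
    rw [← scale_norm _ (hpos t ht n hn)]
    congr 1
    have hm : Real.pi / (2 * t) * ((n : ℝ) + 1) ^ 2
        = Real.pi / (2 * t) * (n : ℝ) ^ 2 * (1 + 1 / (n : ℝ)) ^ 2 := by
      field_simp
    rw [hm, ← qScale_comp P hl0 (hpos t ht n hn)]
    ext x
    simp only [qScale, Pi.sub_apply]
    ring
  refine ⟨hi, fun t ht => ⟨hii1 t ht, hii2 t ht⟩, ?_⟩
  intro t ht S hS hcon
  have hfin : eLpNorm Q 2 volume ≠ ⊤ := by
    rw [eLpNorm_congr_ae hQP]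
    have hL1 : MemLp P 1 volume := memLp_one_iff_integrable.2 hPi
    have hLi : MemLp P ⊤ volume := memLp_top_of_bound hPi.1 C (Eventually.of_forall hC)
    have h2 : (eLpNorm P 2 volume) ^ 2 ≠ ⊤ := by
      rw [sq_eLpNorm]
      have : Integrable (fun x => ‖P x‖ ^ 2) := by
        refine (hPi.norm.const_mul C).mono' (by fun_prop) ?_
        filter_upwards with x
        rw [norm_pow, norm_norm, sq]
        gcongr
        exact hC x
      have h3 := this.2
      rw [hasFiniteIntegral_iff_enorm] at h3
      simpa [enorm_pow] using h3.ne
    intro h; rw [h] at h2; simp at h2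
  have hrad : ∀ μ : ℝ, IsRadial (qScale Q μ) := by
    intro μ x y hxy
    unfold qScale
    rw [hQrad (μ • x) (μ • y) (by rw [norm_smul, norm_smul, hxy])]
  obtain ⟨δ, hδ, H⟩ := hcon (eLpNorm Q 2 volume).toReal (ENNReal.toReal_pos hQne hfin)
  have hev := (hii2 t ht).eventually (gt_mem_nhds (ENNReal.ofReal_pos.2 hδ))
  obtain ⟨n, hn1, hn2⟩ := (hev.and (eventually_ge_atTop 1)).exists
  have := H _ _ (hrad _) (by rw [hi _ (hpos' t ht n)]) (hrad _) (by rw [hi _ (hpos t ht n hn2)]) hn1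
  rw [hS _ (hpos' t ht n), hS _ (hpos t ht n hn2), ENNReal.ofReal_toReal hfin] at this
  have h4 := ENNReal.pow_right_strictMono (n := 2) (by norm_num) this
  simp only at h4
  rw [hii1 t ht n hn2] at h4
  refine absurd h4 (not_lt.2 ?_)
  rw [two_mul]
  exact le_self_add
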